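/- arXiv:1208.1412 — 3 statements merged into one kernel-verified Lean document; each statement's English description precedes it below -/
import Mathlib

section
/- Let p be a prime with p ≡ 1 (mod 8). Let h be the class number of the imaginary quadratic field ℚ(√−p) (whose discriminant is −4p, since p ≡ 1 (mod 4)), and let h′ be the class number of the imaginary quadratic field ℚ(√−2p) (whose discriminant is −8p). If p ≡ 1 (mod 16), then 8 divides h if and only if 8 divides h′; if p ≡ 9 (mod 16), then exactly one of h and h′ is divisible by 8. -/
/-!
Factoring the Dedekind zeta function as `ζ(s) L(s, χ)` turns the analytic class number formula into
`h = (2√p / π) L(1, χ₄ · (·/p))` and `h' = (2√(2p) / π) L(1, χ₈' · (·/p))`. A Gauss sum expands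
the Legendre symbol and a sine combination expands `χ₄` or `χ₈'`, so both values of `L` are finite
combinations of the series `∑ sin (2πny) / n = π (1/2 - y)`, `0 < y < 1`. With
`T(k) = ∑_{j ≤ k} (j/p)` the result is `h = ±2 T(p/4)` and `h' = ±2 (T(p/8) + T(3p/8))`.

As `-1` and `2` are squares modulo `p`, splitting `T(p/4)` into even and odd `j` gives
`T(p/4) = T(p/8) - T(3p/8)`. Hence `h/2 ± h'/2` is twice `T(p/8)` or `T(3p/8)` up to sign, while
`T(k) ≡ k (mod 2)`: `h` and `h'` are divisible by `4`, and `h/4 ≡ h'/4 + (p - 1)/8 (mod 2)`.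
-/

open Filter Topology

section DirichletSeries

variable {E : Type*} [NormedAddCommGroup E] [NormedSpace ℝ E]

lemma norm_sum_Ico_smul_le_of_antitone {u : ℕ → ℝ} (hu : Antitone u) (hu₀ : ∀ n, 0 ≤ u n)
    {a : ℕ → E} {C : ℝ} (hC : ∀ n, ‖∑ i ∈ Finset.range n, a i‖ ≤ C) {m n : ℕ} (hmn : m < n) :
    ‖∑ i ∈ Finset.Ico m n, u i • a i‖ ≤ 2 * C * u m := by
  have hboundary (k l : ℕ) : ‖u k • ∑ i ∈ Finset.range l, a i‖ ≤ u k * C := by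
    rw [norm_smul, Real.norm_of_nonneg (hu₀ k)]
    exact mul_le_mul_of_nonneg_left (hC l) (hu₀ k)
  have hinner : ‖∑ i ∈ Finset.Ico m (n - 1), (u (i + 1) - u i) • ∑ j ∈ Finset.range (i + 1), a j‖
      ≤ (u m - u (n - 1)) * C := calc
    _ ≤ ∑ i ∈ Finset.Ico m (n - 1), (u i - u (i + 1)) * C := by
      refine norm_sum_le_of_le _ fun i _ => ?_
      have hle := sub_nonneg.2 (hu i.le_succ)
      rw [norm_smul, norm_sub_rev, Real.norm_of_nonneg hle]
      exact mul_le_mul_of_nonneg_left (hC _) hle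
    _ = (u m - u (n - 1)) * C := by
      rw [← Finset.sum_mul, ← neg_sub, ← Finset.sum_Ico_sub u (Nat.le_sub_one_of_lt hmn),
        ← Finset.sum_neg_distrib]
      simp only [neg_sub]
  rw [Finset.sum_Ico_by_parts _ _ hmn]
  linarith [norm_sub_le_of_le (norm_sub_le_of_le (hboundary (n - 1) n) (hboundary m m)) hinner]

theorem tendsto_dirichletSeries_nhdsGT {a : ℕ → E} {C : ℝ}
    (hC : ∀ n, ‖∑ i ∈ Finset.range n, a i‖ ≤ C) {σ : ℝ} (hσ : 0 < σ) {L : E}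
    (hL : Tendsto (fun N => ∑ n ∈ Finset.range N, (n + 1 : ℝ) ^ (-σ) • a n) atTop (𝓝 L))
    {F : ℝ → E} (hF : ∀ s, σ < s → HasSum (fun n : ℕ => (n + 1 : ℝ) ^ (-s) • a n) (F s)) :
    Tendsto F (𝓝[>] σ) (𝓝 L) := by
  have hC₀ : 0 ≤ C := (norm_nonneg _).trans (hC 0)
  have htail (s : ℝ) (hs : σ < s) (N : ℕ) :
      dist (F s) (∑ n ∈ Finset.range N, (n + 1 : ℝ) ^ (-s) • a n)
        ≤ 2 * C * (N + 1 : ℝ) ^ (-σ) := by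
    have hanti : Antitone fun n : ℕ => (n + 1 : ℝ) ^ (-s) := fun m n hmn =>
      Real.rpow_le_rpow_of_nonpos (by positivity) (by gcongr) (by linarith)
    refine le_of_tendsto ((hF s hs).tendsto_sum_nat.dist tendsto_const_nhds) ?_
    filter_upwards [eventually_gt_atTop N] with M hNM
    rw [dist_eq_norm, ← Finset.sum_Ico_eq_sub _ hNM.le]
    refine (norm_sum_Ico_smul_le_of_antitone hanti (fun n => by positivity) hC hNM).trans ?_
    gcongr
    · norm_num
  have hdecay : Tendsto (fun N : ℕ => 2 * C * (N + 1 : ℝ) ^ (-σ)) atTop (𝓝 0) := by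
    simpa using ((tendsto_rpow_neg_atTop hσ).comp
      (tendsto_atTop_add_const_right atTop (1 : ℝ) tendsto_natCast_atTop_atTop)).const_mul (2 * C)
  have huniform : TendstoUniformlyOnFilter
      (fun N s => ∑ n ∈ Finset.range N, (n + 1 : ℝ) ^ (-s) • a n) F atTop (𝓝[>] σ) := by
    refine Metric.tendstoUniformlyOnFilter_iff.2 fun ε hε => ?_
    filter_upwards [(hdecay.eventually_lt_const hε).prod_mk self_mem_nhdsWithin]
      with ⟨N, s⟩ ⟨hN, hs⟩
    exact (htail s hs N).trans_lt hN
  refine huniform.tendsto_of_eventually_tendsto (.of_forall fun N => ?_) hL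
  refine (tendsto_finsetSum _ fun n _ => ?_).mono_left nhdsWithin_le_nhds
  exact (((Real.continuous_const_rpow (by positivity)).comp continuous_neg).tendsto σ).smul_const _

end DirichletSeries

section ExpZetaAtOne

open Complex
open scoped ComplexConjugate

variable {z : ℂ}

lemma norm_geom_sum_le_of_norm_eq_one (hz : ‖z‖ = 1) (hz₁ : z ≠ 1) (n : ℕ) :
    ‖∑ i ∈ Finset.range n, z ^ i‖ ≤ 2 / ‖z - 1‖ := by
  rw [geom_sum_eq hz₁, norm_div]
  gcongr
  exact (norm_sub_le _ _).trans (by rw [norm_pow, hz, one_pow, norm_one]; norm_num)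

lemma norm_sum_pow_succ_le_of_norm_eq_one (hz : ‖z‖ = 1) (hz₁ : z ≠ 1) (n : ℕ) :
    ‖∑ i ∈ Finset.range n, z ^ (i + 1)‖ ≤ 2 / ‖z - 1‖ := by
  simp_rw [pow_succ, ← Finset.sum_mul, norm_mul, hz, mul_one]
  exact norm_geom_sum_le_of_norm_eq_one hz hz₁ n

lemma one_sub_mem_slitPlane_of_norm_eq_one (hz : ‖z‖ = 1) (hz₁ : z ≠ 1) : 1 - z ∈ slitPlane := by
  refine Or.inl ?_
  have hre : z.re < 1 := by
    refine lt_of_le_of_ne (hz ▸ re_le_norm z) fun hre => hz₁ (Complex.ext hre ?_)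
    have := sq_norm_sub_sq_re z
    simpa [hz, hre, eq_comm] using this
  simpa using hre

lemma tendsto_sum_pow_div_of_norm_eq_one (hz : ‖z‖ = 1) (hz₁ : z ≠ 1) :
    Tendsto (fun N => ∑ n ∈ Finset.range N, z ^ n / n) atTop (𝓝 (-log (1 - z))) := by
  obtain ⟨L, hL⟩ : ∃ L, Tendsto (fun N => ∑ n ∈ Finset.range N, z ^ n / n) atTop (𝓝 L) := by
    have hcauchy := Antitone.cauchySeq_series_mul_of_tendsto_zero_of_bounded
      (f := fun n : ℕ => 1 / ((n : ℝ) + 1)) (fun m n h => Nat.one_div_le_one_div h)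
      tendsto_one_div_add_atTop_nhds_zero_nat (norm_sum_pow_succ_le_of_norm_eq_one hz hz₁)
    obtain ⟨L, hL⟩ := cauchySeq_tendsto_of_complete hcauchy
    refine ⟨L, (tendsto_add_atTop_iff_nat 1).1 (hL.congr fun N => ?_)⟩
    rw [Finset.sum_range_succ']
    simp [div_eq_inv_mul]
  have habel := tendsto_map'_iff.1 (tendsto_tsum_powerSeries_nhdsWithin_lt hL)
  have hlog : Tendsto (fun x : ℝ => -log (1 - x * z)) (𝓝[<] 1) (𝓝 (-log (1 - z))) := by
    have hcont : ContinuousAt (fun x : ℝ => -log (1 - x * z)) 1 :=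
      (ContinuousAt.clog (by fun_prop)
        (by simpa using one_sub_mem_slitPlane_of_norm_eq_one hz hz₁)).neg
    simpa using hcont.tendsto.mono_left nhdsWithin_le_nhds
  suffices L = -log (1 - z) from this ▸ hL
  refine tendsto_nhds_unique (habel.congr' ?_) hlog
  filter_upwards [Ioo_mem_nhdsLT one_pos] with x hx
  have hxz : ‖(x : ℂ) * z‖ < 1 := by simpa [hz, abs_of_pos hx.1] using hx.2
  rw [← (hasSum_taylorSeries_neg_log hxz).tsum_eq]
  exact tsum_congr fun n => by simp only [mul_pow]; ring

lemma exp_two_pi_I_mul_ne_one {a : ℝ} (ha : (a : UnitAddCircle) ≠ 0) :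
    exp (2 * Real.pi * I * a) ≠ 1 := by
  contrapose! ha
  obtain ⟨n, hn⟩ := exp_eq_one_iff.1 ha
  refine (AddCircle.coe_eq_zero_iff 1).2 ⟨n, ?_⟩
  have han : (a : ℂ) = n := mul_left_cancel₀ two_pi_I_ne_zero (hn.trans (mul_comm _ _))
  rw [zsmul_one]
  exact_mod_cast han.symm

lemma norm_exp_two_pi_I_mul (a : ℝ) : ‖exp (2 * Real.pi * I * a)‖ = 1 := by
  rw [← norm_exp_ofReal_mul_I (2 * Real.pi * a)]
  push_cast
  ring_nf

theorem expZeta_one {a : ℝ} (ha : (a : UnitAddCircle) ≠ 0) :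
    HurwitzZeta.expZeta a 1 = -log (1 - exp (2 * Real.pi * I * a)) := by
  set z := exp (2 * Real.pi * I * a) with hzdef
  have hz : ‖z‖ = 1 := norm_exp_two_pi_I_mul a
  have hz₁ : z ≠ 1 := exp_two_pi_I_mul_ne_one ha
  have hright : Tendsto (fun s : ℝ => HurwitzZeta.expZeta a s) (𝓝[>] 1)
      (𝓝 (HurwitzZeta.expZeta a 1)) := by
    have hcont : Continuous fun s : ℝ => HurwitzZeta.expZeta a s :=
      (HurwitzZeta.differentiable_expZeta_of_ne_zero ha).continuous.comp continuous_ofReal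
    simpa using (hcont.tendsto 1).mono_left nhdsWithin_le_nhds
  refine tendsto_nhds_unique hright
    (tendsto_dirichletSeries_nhdsGT (norm_sum_pow_succ_le_of_norm_eq_one hz hz₁) one_pos ?_ ?_)
  · have hsum := (tendsto_add_atTop_iff_nat 1).2 (tendsto_sum_pow_div_of_norm_eq_one hz hz₁)
    refine hsum.congr fun N => ?_
    rw [Finset.sum_range_succ']
    simp [Real.rpow_neg_one, div_eq_inv_mul]
  · intro s hs
    have hsum := HurwitzZeta.hasSum_expZeta_of_one_lt_re a (s := (s : ℂ)) (by simpa using hs)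
    have hs₀ : (s : ℂ) ≠ 0 := ofReal_ne_zero.2 (by linarith)
    rw [← hasSum_nat_add_iff' 1, Finset.sum_range_one, Nat.cast_zero, zero_cpow hs₀, div_zero,
      sub_zero] at hsum
    refine hsum.congr_fun fun n => ?_
    rw [real_smul, ofReal_cpow (by positivity), ofReal_neg, cpow_neg, div_eq_inv_mul, hzdef,
      ← exp_nat_mul, mul_comm _ (2 * Real.pi * I * a)]
    push_cast
    rfl

lemma sinZeta_one_of_mem_Ioo {y : ℝ} (hy : y ∈ Set.Ioo 0 1) :
    HurwitzZeta.sinZeta y 1 = Real.pi * (1 / 2 - y) := by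
  have hsin : 0 < Real.sin (Real.pi * y) := Real.sin_pos_of_pos_of_lt_pi
    (mul_pos Real.pi_pos hy.1) (mul_lt_of_lt_one_right Real.pi_pos hy.2)
  have hpolar : 1 - exp (2 * Real.pi * I * y) = (2 * Real.sin (Real.pi * y) : ℝ) *
      (cos ((Real.pi * y - Real.pi / 2 : ℝ) : ℂ) + sin ((Real.pi * y - Real.pi / 2 : ℝ)) * I) := by
    push_cast
    rw [cos_sub_pi_div_two, sin_sub_pi_div_two,
      show 2 * Real.pi * I * y = (2 * (Real.pi * y) : ℂ) * I by ring, exp_mul_I, cos_two_mul,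
      sin_two_mul]
    linear_combination -2 * sin_sq_add_cos_sq (Real.pi * y)
  have harg : arg (1 - exp (2 * Real.pi * I * y)) = Real.pi * y - Real.pi / 2 := by
    rw [hpolar]
    refine arg_mul_cos_add_sin_mul_I (by linarith) ⟨?_, ?_⟩ <;> nlinarith [Real.pi_pos, hy.1, hy.2]
  have hconj : exp (2 * Real.pi * I * (-y : ℝ)) = conj (exp (2 * Real.pi * I * y)) := by
    rw [← exp_conj]
    simp [map_ofNat]
  have hy₀ : (y : UnitAddCircle) ≠ 0 := by
    rw [Ne, AddCircle.coe_eq_zero_iff_of_mem_Ico (p := (1 : ℝ)) ⟨hy.1.le, hy.2⟩]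
    exact hy.1.ne'
  have hlog : log (1 - conj (exp (2 * Real.pi * I * y))) =
      conj (log (1 - exp (2 * Real.pi * I * y))) := by
    rw [← log_conj _ (by rw [harg]; nlinarith [Real.pi_pos, hy.2]), map_sub, map_one]
  rw [HurwitzZeta.sinZeta_eq, ← AddCircle.coe_neg, expZeta_one hy₀,
    expZeta_one (by simpa using hy₀), hconj, hlog, neg_sub_neg, ← neg_sub, sub_conj, log_im, harg]
  push_cast
  field [I_ne_zero]

theorem sinZeta_one {y : ℝ} (hy : Int.fract y ≠ 0) :
    HurwitzZeta.sinZeta y 1 = Real.pi * (1 / 2 - Int.fract y) := by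
  have hcoe : (y : UnitAddCircle) = (Int.fract y : ℝ) := by
    rw [← Int.self_sub_floor, AddCircle.coe_sub, eq_comm, sub_eq_self]
    exact (AddCircle.coe_eq_zero_iff 1).2 ⟨⌊y⌋, by simp⟩
  rw [hcoe, sinZeta_one_of_mem_Ioo
    ⟨(Int.fract_nonneg y).lt_of_ne' hy, Int.fract_lt_one y⟩]

end ExpZetaAtOne

section LegendreSums

lemma sum_range_natCast_zmod {M : Type*} [AddCommMonoid M] (n : ℕ) [NeZero n] (f : ZMod n → M) :
    ∑ j ∈ Finset.range n, f j = ∑ x, f x :=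
  Finset.sum_nbij' (fun j => (j : ZMod n)) ZMod.val (by simp)
    (fun x _ => Finset.mem_range.2 x.val_lt)
    (fun j hj => ZMod.val_cast_of_lt (Finset.mem_range.1 hj)) (by simp) (by simp)

variable (p : ℕ) [Fact p.Prime]

lemma legendreSym_sub_eq_of_mod_four_eq_one (hp : p % 4 = 1) (a : ℤ) :
    legendreSym p (p - a) = legendreSym p a := by
  have hneg : legendreSym p (-1) = 1 := by
    rw [legendreSym.at_neg_one (by rintro rfl; omega), ZMod.χ₄_nat_one_mod_four hp]
  rw [legendreSym.mod, show ((p : ℤ) - a) % p = (-1 * a) % p by simp,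
    ← legendreSym.mod, legendreSym.mul, hneg, one_mul]

lemma legendreSym_two_mul_of_mod_eight_eq_one (hp : p % 8 = 1) (a : ℤ) :
    legendreSym p (2 * a) = legendreSym p a := by
  have htwo : legendreSym p 2 = 1 := by
    rw [legendreSym.at_two (by rintro rfl; omega), ZMod.χ₈_nat_mod_eight, hp]
    rfl
  rw [legendreSym.mul, htwo, one_mul]

lemma sum_range_legendreSym (hp : p ≠ 2) : ∑ j ∈ Finset.range p, legendreSym p j = 0 := by
  have hsum := sum_range_natCast_zmod p (quadraticChar (ZMod p))
  rw [quadraticChar_sum_zero (by rwa [ZMod.ringChar_zmod_n])] at hsum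
  simpa [legendreSym] using hsum

lemma sum_range_legendreSym_mul_self (hp : p % 4 = 1) :
    ∑ j ∈ Finset.range p, legendreSym p j * j = 0 := by
  have hzero : legendreSym p p = 0 := (legendreSym.eq_zero_iff p p).2 (by simp)
  have hflip := Finset.sum_flip (n := p) fun j => legendreSym p j * j
  have hterm : ∀ j ∈ Finset.range (p + 1), legendreSym p (p - j : ℕ) * ((p - j : ℕ) : ℤ) =
      p * legendreSym p j - legendreSym p j * j := fun j hj => by
    rw [Nat.cast_sub (Finset.mem_range_succ_iff.1 hj),
      legendreSym_sub_eq_of_mod_four_eq_one p hp]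
    ring
  rw [Finset.sum_congr rfl hterm, Finset.sum_sub_distrib, ← Finset.mul_sum,
    Finset.sum_range_succ, Finset.sum_range_succ, sum_range_legendreSym p (by rintro rfl; omega),
    hzero] at hflip
  linarith

/-- The partial sum `∑_{j ≤ k} (j / p)` of Legendre symbols. -/
def legendreSum (k : ℕ) : ℤ := ∑ j ∈ Finset.range (k + 1), legendreSym p j

lemma legendreSum_zero : legendreSum p 0 = 0 := by simp [legendreSum]

lemma legendreSum_succ (k : ℕ) :
    legendreSum p (k + 1) = legendreSum p k + legendreSym p (k + 1 : ℕ) :=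
  Finset.sum_range_succ _ _

lemma legendreSum_sub_one_sub (hp : p % 4 = 1) {k : ℕ} (hk : k < p) :
    legendreSum p (p - 1 - k) = -legendreSum p k := by
  induction k with
  | zero =>
    have htotal := sum_range_legendreSym p (by rintro rfl; omega)
    rwa [legendreSum_zero, neg_zero, legendreSum, Nat.sub_zero, Nat.sub_add_cancel (by omega)]
  | succ k ih =>
    have hstep := legendreSum_succ p (p - 1 - (k + 1))
    have hreflect := legendreSym_sub_eq_of_mod_four_eq_one p hp (k + 1 : ℕ)
    rw [← Nat.cast_sub hk.le] at hreflect
    rw [show p - 1 - (k + 1) + 1 = p - 1 - k by omega, ih (by omega),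
      show p - 1 - k = p - (k + 1) by omega, hreflect] at hstep
    rw [legendreSum_succ]
    linarith

lemma legendreSum_half (hp : p % 4 = 1) : legendreSum p (p / 2) = 0 := by
  have hreflect := legendreSum_sub_one_sub p hp (k := p / 2) (by omega)
  rw [show p - 1 - p / 2 = p / 2 by omega] at hreflect
  linarith

lemma legendreSum_two_mul (hp : p % 8 = 1) {k : ℕ} (hk : k ≤ p / 2) :
    legendreSum p (2 * k) = legendreSum p k - legendreSum p (p / 2 - k) := by
  induction k with
  | zero => simp [legendreSum_zero, legendreSum_half p (by omega : p % 4 = 1)]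
  | succ k ih =>
    have hodd : legendreSym p (2 * k + 1 : ℕ) = legendreSym p (p / 2 - k : ℕ) := by
      rw [← legendreSym_sub_eq_of_mod_four_eq_one p (by omega),
        ← legendreSym_two_mul_of_mod_eight_eq_one p hp (p / 2 - k : ℕ)]
      congr 1
      omega
    have heven : legendreSym p (2 * k + 1 + 1 : ℕ) = legendreSym p (k + 1 : ℕ) := by
      rw [← legendreSym_two_mul_of_mod_eight_eq_one p hp (k + 1 : ℕ)]
      congr 1
    have hstep := legendreSum_succ p (p / 2 - (k + 1))
    rw [show p / 2 - (k + 1) + 1 = p / 2 - k by omega] at hstep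
    rw [show 2 * (k + 1) = 2 * k + 1 + 1 by ring, legendreSum_succ, legendreSum_succ,
      legendreSum_succ, ih (by omega), hodd, heven, hstep]
    ring

lemma legendreSum_modEq_two {k : ℕ} (hk : k < p) : legendreSum p k ≡ k [ZMOD 2] := by
  induction k with
  | zero => simp [legendreSum_zero]
  | succ k ih =>
    have hne : (((k + 1 : ℕ) : ℤ) : ZMod p) ≠ 0 := by
      rw [Int.cast_natCast, Ne, ZMod.natCast_eq_zero_iff]
      exact Nat.not_dvd_of_pos_of_lt k.succ_pos hk
    rw [legendreSum_succ, Nat.cast_succ]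
    refine (ih (by omega)).add ?_
    rcases legendreSym.eq_one_or_neg_one p hne with h | h <;> rw [← Nat.cast_succ, h]
    rfl

end LegendreSums

theorem eight_dvd_iff_of_eq_two_mul_legendreSum (p : ℕ) [Fact p.Prime] (hp : p % 8 = 1) {h h' : ℕ}
    (hh : h = 2 * (legendreSum p (p / 4)).natAbs)
    (hh' : h' = 2 * (legendreSum p (p / 8) + legendreSum p (3 * p / 8)).natAbs) :
    (p % 16 = 1 → (8 ∣ h ↔ 8 ∣ h')) ∧ (p % 16 = 9 → Xor (8 ∣ h) (8 ∣ h')) := by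
  have hdouble := legendreSum_two_mul p hp (k := p / 8) (by omega)
  have hparity := (legendreSum_modEq_two p (k := p / 8) (by omega)).dvd
  have hparity' := (legendreSum_modEq_two p (k := p / 4) (by omega)).dvd
  rw [show p / 2 - p / 8 = 3 * p / 8 by omega, show 2 * (p / 8) = p / 4 by omega] at hdouble
  unfold Xor
  omega

section GaussSum

open Complex

lemma fract_add_natCast_div {p : ℕ} {y : ℝ} (hy : y ∈ Set.Ioo 0 1)
    (hpy : Int.fract (p * y) ≠ 0) {j : ℕ} (hj : j < p) :
    Int.fract (y + j / p) ≠ 0 ∧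
      Int.fract (y + j / p) = y + j / p - 1 + if j < p - ⌊p * y⌋₊ then 1 else 0 := by
  have hp₀ : (0 : ℝ) < p := by exact_mod_cast j.zero_le.trans_lt hj
  have hj₁ : (j / p : ℝ) < 1 := (div_lt_one hp₀).2 (by exact_mod_cast hj)
  have hpy₀ : 0 ≤ p * y := by have := hy.1; positivity
  have hfloor : (⌊p * y⌋₊ : ℝ) < p * y := by
    refine (Nat.floor_le hpy₀).lt_of_ne fun h => hpy ?_
    rw [← h, Int.fract_natCast]
  split_ifs with hlt
  · have hfract : y + j / p < 1 := by
      rw [← lt_sub_iff_add_lt, ← mul_lt_mul_iff_right₀ hp₀, mul_one_sub, mul_div_cancel₀ _ hp₀.ne']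
      have : (⌊p * y⌋₊ + 1 + j : ℝ) ≤ p := by exact_mod_cast (by omega : ⌊p * y⌋₊ + 1 + j ≤ p)
      linarith [Nat.lt_floor_add_one (p * y)]
    have hpos : 0 < y + j / p := by have := hy.1; positivity
    rw [Int.fract_eq_self.2 ⟨hpos.le, hfract⟩]
    exact ⟨hpos.ne', by ring⟩
  · have hfract : 1 < y + j / p := by
      rw [← sub_lt_iff_lt_add, ← mul_lt_mul_iff_right₀ hp₀, mul_one_sub, mul_div_cancel₀ _ hp₀.ne']
      have : (p : ℝ) ≤ ⌊p * y⌋₊ + j := by exact_mod_cast (by omega : p ≤ ⌊p * y⌋₊ + j)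
      linarith
    have heq : Int.fract (y + j / p) = y + j / p - 1 :=
      Int.fract_eq_iff.2 ⟨by linarith, by linarith [hy.2], 1, by simp⟩
    rw [heq]
    exact ⟨by linarith, by ring⟩

variable (p : ℕ) [Fact p.Prime]

/-- The complex-valued Legendre symbol modulo `p`, as a multiplicative character. -/
noncomputable def complexQuadraticChar : MulChar (ZMod p) ℂ :=
  (quadraticChar (ZMod p)).ringHomComp (Int.castRingHom ℂ)

lemma complexQuadraticChar_natCast (n : ℕ) : complexQuadraticChar p n = legendreSym p n := by
  simp [complexQuadraticChar, legendreSym, MulChar.ringHomComp_apply]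

lemma complexQuadraticChar_isQuadratic : (complexQuadraticChar p).IsQuadratic :=
  (quadraticChar_isQuadratic (ZMod p)).comp _

lemma complexQuadraticChar_ne_one (hp : p ≠ 2) : complexQuadraticChar p ≠ 1 := by
  rw [complexQuadraticChar, Ne, MulChar.ringHomComp_eq_one_iff (RingHom.injective_int _)]
  exact quadraticChar_ne_one (by rwa [ZMod.ringChar_zmod_n])

/-- The quadratic Gauss sum `∑_{j mod p} (j / p) e^{2πij/p}`. -/
noncomputable def quadraticGaussSum : ℂ :=
  gaussSum (complexQuadraticChar p) ZMod.stdAddChar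

lemma sum_range_legendreSym_mul_exp (hp : p ≠ 2) (n : ℕ) :
    ∑ j ∈ Finset.range p, (legendreSym p j : ℂ) * exp (2 * Real.pi * I * (n * j) / p) =
      legendreSym p n * quadraticGaussSum p := by
  have hshift : gaussSum (complexQuadraticChar p) (ZMod.stdAddChar.mulShift (n : ZMod p)) =
      legendreSym p n * quadraticGaussSum p := by
    rw [← complexQuadraticChar_natCast]
    by_cases hn : (n : ZMod p) = 0
    · rw [hn, AddChar.mulShift_zero, gaussSum_one_right (complexQuadraticChar_ne_one p hp),
        MulChar.map_zero, zero_mul]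
    · have hunit := gaussSum_mulShift_eq (complexQuadraticChar p) ZMod.stdAddChar (Units.mk0 _ hn)
      rwa [(complexQuadraticChar_isQuadratic p).inv, Units.val_mk0] at hunit
  rw [← hshift, gaussSum, ← sum_range_natCast_zmod p]
  refine Finset.sum_congr rfl fun j _ => ?_
  have hexp := ZMod.stdAddChar_coe (N := p) (n * j : ℕ)
  rw [AddChar.mulShift_apply, complexQuadraticChar_natCast]
  push_cast at hexp
  rw [hexp]

lemma exists_abs_eq_sqrt_and_quadraticGaussSum_eq (hp : p % 4 = 1) :
    ∃ g : ℝ, |g| = √p ∧ quadraticGaussSum p = g := by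
  have hneg : complexQuadraticChar p (-1) = 1 := by
    have hsub := legendreSym_sub_eq_of_mod_four_eq_one p hp 1
    rw [legendreSym.at_one, legendreSym] at hsub
    push_cast at hsub
    rw [CharP.cast_eq_zero, zero_sub] at hsub
    rw [complexQuadraticChar, MulChar.ringHomComp_apply, hsub, map_one]
  have hsq := gaussSum_sq (complexQuadraticChar_ne_one p (by rintro rfl; omega))
    (complexQuadraticChar_isQuadratic p) (ZMod.isPrimitive_stdAddChar p)
  have hroot : ((√p : ℝ) : ℂ) ^ 2 = p := by exact_mod_cast Real.sq_sqrt (Nat.cast_nonneg p)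
  rw [hneg, one_mul, ZMod.card, ← hroot, sq_eq_sq_iff_eq_or_eq_neg] at hsq
  rcases hsq with h | h
  · exact ⟨√p, abs_of_nonneg (Real.sqrt_nonneg _), h⟩
  · exact ⟨-√p, by rw [abs_neg, abs_of_nonneg (Real.sqrt_nonneg _)], by rw [ofReal_neg]; exact h⟩

variable {p} {g : ℝ}

lemma sum_range_legendreSym_mul_sin (hp : p ≠ 2) (hg : quadraticGaussSum p = g) (y : ℝ) (n : ℕ) :
    ∑ j ∈ Finset.range p, (legendreSym p j : ℝ) * Real.sin (2 * Real.pi * (y + j / p) * n) =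
      legendreSym p n * Real.sin (2 * Real.pi * y * n) * g := by
  have him (k : ℤ) (x : ℝ) : (k * exp (x * I)).im = k * Real.sin x := by
    rw [← ofReal_intCast, im_ofReal_mul, exp_ofReal_mul_I_im]
  have hrotate (j : ℕ) : (legendreSym p j * exp (2 * Real.pi * I * (n * j) / p)) *
      exp ((2 * Real.pi * y * n : ℝ) * I) =
        legendreSym p j * exp ((2 * Real.pi * (y + j / p) * n : ℝ) * I) := by
    rw [mul_assoc, ← exp_add]
    congr 2
    push_cast
    ring
  have hsum := congrArg (fun z => (z * exp ((2 * Real.pi * y * n : ℝ) * I)).im)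
    (sum_range_legendreSym_mul_exp p hp n)
  simp only [Finset.sum_mul, hrotate, im_sum, him] at hsum
  rw [hsum, hg, mul_right_comm, im_mul_ofReal, him]

lemma hasSum_legendreSym_mul_sin (hp : p ≠ 2) (hg : quadraticGaussSum p = g) (hg₀ : g ≠ 0) (y : ℝ)
    {s : ℂ} (hs : 1 < s.re) :
    HasSum (fun n : ℕ => ((legendreSym p n * Real.sin (2 * Real.pi * y * n) : ℝ) : ℂ) / n ^ s)
      ((∑ j ∈ Finset.range p, legendreSym p j * HurwitzZeta.sinZeta (y + j / p : ℝ) s) / g) := by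
  have hsum := (hasSum_sum fun j (_ : j ∈ Finset.range p) =>
    (HurwitzZeta.hasSum_nat_sinZeta (y + j / p) hs).mul_left (legendreSym p j : ℂ)).div_const
      (g : ℂ)
  refine hsum.congr_fun fun n => ?_
  have hg₀' : (g : ℂ) ≠ 0 := ofReal_ne_zero.2 hg₀
  have hsin := congrArg ofReal (sum_range_legendreSym_mul_sin hp hg y n)
  rw [ofReal_sum, ofReal_mul _ g] at hsin
  simp only [← mul_div_assoc, ← Finset.sum_div]
  rw [div_right_comm, ← mul_div_cancel_right₀ (ofReal _) hg₀', ← hsin]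
  push_cast
  rfl

lemma sum_legendreSym_mul_sinZeta_one (hp : p % 4 = 1) {y : ℝ} (hy : y ∈ Set.Ioo 0 1)
    (hpy : Int.fract (p * y) ≠ 0) :
    ∑ j ∈ Finset.range p, legendreSym p j * HurwitzZeta.sinZeta (y + j / p : ℝ) 1 =
      Real.pi * legendreSum p ⌊p * y⌋₊ := by
  have hfloor : ⌊p * y⌋₊ < p := by
    rw [Nat.floor_lt (by have := hy.1; positivity)]
    exact mul_lt_of_lt_one_right (by exact_mod_cast (Fact.out : p.Prime).pos) hy.2
  have hterm : ∀ j ∈ Finset.range p, legendreSym p j * HurwitzZeta.sinZeta (y + j / p : ℝ) 1 =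
      Real.pi * (3 / 2 - y) * (legendreSym p j : ℤ) - Real.pi / p * (legendreSym p j * j : ℤ) -
        Real.pi * ((if j < p - ⌊p * y⌋₊ then legendreSym p j else 0 : ℤ) : ℂ) := by
    intro j hj
    obtain ⟨hne, heq⟩ := fract_add_natCast_div hy hpy (Finset.mem_range.1 hj)
    rw [sinZeta_one hne, heq]
    split_ifs <;> push_cast <;> ring
  have hfilter : (Finset.range p).filter (· < p - ⌊p * y⌋₊) =
      Finset.range (p - 1 - ⌊p * y⌋₊ + 1) := by
    ext j
    simp only [Finset.mem_filter, Finset.mem_range]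
    omega
  rw [Finset.sum_congr rfl hterm, Finset.sum_sub_distrib, Finset.sum_sub_distrib, ← Finset.mul_sum,
    ← Finset.mul_sum, ← Finset.mul_sum, ← Int.cast_sum, ← Int.cast_sum, ← Int.cast_sum,
    sum_range_legendreSym p (by rintro rfl; omega), sum_range_legendreSym_mul_self p hp,
    ← Finset.sum_filter, hfilter, ← legendreSum, legendreSum_sub_one_sub p hp hfloor]
  push_cast
  ring

theorem tendsto_sum_legendreSym_mul_sinZeta (hp : p % 4 = 1) {y : ℝ} (hy : y ∈ Set.Ioo 0 1)
    (hpy : Int.fract (p * y) ≠ 0) :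
    Tendsto (fun s : ℝ => ∑ j ∈ Finset.range p,
        legendreSym p j * HurwitzZeta.sinZeta (y + j / p : ℝ) s) (𝓝[>] 1)
      (𝓝 (Real.pi * legendreSum p ⌊p * y⌋₊)) := by
  rw [← sum_legendreSym_mul_sinZeta_one hp hy hpy]
  refine tendsto_finsetSum _ fun j _ => Tendsto.const_mul _ ?_
  have hcont : Continuous fun s : ℝ => HurwitzZeta.sinZeta (y + j / p : ℝ) s :=
    (HurwitzZeta.differentiableAt_sinZeta _).continuous.comp continuous_ofReal
  simpa using (hcont.tendsto 1).mono_left nhdsWithin_le_nhds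

end GaussSum

section QuadraticAlgebra

open QuadraticAlgebra

variable {R : Type*} [CommRing R] {a b : R}

lemma algebraTrace_quadraticAlgebra (z : QuadraticAlgebra R a b) :
    Algebra.trace R (QuadraticAlgebra R a b) z = trace z := by
  simp [Algebra.trace_eq_matrix_trace (basis a b), Matrix.trace_fin_two,
    Algebra.leftMulMatrix_eq_repr_mul, basis, trace_def]
  ring

lemma discr_basis_quadraticAlgebra : Algebra.discr R (basis a b) = b ^ 2 + 4 * a := by
  simp [Algebra.discr_def, Matrix.det_fin_two, Algebra.traceForm_apply,
    algebraTrace_quadraticAlgebra, trace_def, basis]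
  ring

lemma injective_algHom_quadraticAlgebra {A : Type*} [Ring A] [Algebra R A]
    (hA : Function.Injective (algebraMap R A))
    (hnorm : ∀ z : QuadraticAlgebra R a b, norm z = 0 → z = 0)
    (f : QuadraticAlgebra R a b →ₐ[R] A) : Function.Injective f := by
  rw [injective_iff_map_eq_zero]
  refine fun z hz => hnorm z (hA ?_)
  rw [map_zero, ← f.commutes, algebraMap_norm_eq_mul_star, map_mul, hz, zero_mul]

lemma isIntegral_norm_quadraticAlgebra {a b : ℚ} {z : QuadraticAlgebra ℚ a b}
    (hz : IsIntegral ℤ z) : IsIntegral ℤ (norm z) := by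
  rw [← isIntegral_algebraMap_iff (B := QuadraticAlgebra ℚ a b) algebraMap_injective,
    algebraMap_norm_eq_mul_star]
  exact hz.mul (hz.map (starRingEnd (QuadraticAlgebra ℚ a b)).toIntAlgHom)

lemma isIntegral_trace_quadraticAlgebra {a b : ℚ} {z : QuadraticAlgebra ℚ a b}
    (hz : IsIntegral ℤ z) : IsIntegral ℤ (trace z) := by
  rw [← isIntegral_algebraMap_iff (B := QuadraticAlgebra ℚ a b) algebraMap_injective,
    algebraMap_trace_eq_add_star]
  exact hz.add (hz.map (starRingEnd (QuadraticAlgebra ℚ a b)).toIntAlgHom)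

lemma norm_sqrtNeg {d : ℕ} (z : QuadraticAlgebra R (-d) 0) : norm z = z.re ^ 2 + d * z.im ^ 2 := by
  rw [norm_def]; ring

lemma exists_int_eq_of_squarefree_mul_sq {d : ℕ} (hd : Squarefree d) {w : ℚ} {n : ℤ}
    (hw : d * w ^ 2 = n) : ∃ b : ℤ, w = b := by
  have hd₀ : (d : ℚ) ≠ 0 := by exact_mod_cast hd.ne_zero
  obtain ⟨m, hm⟩ : ∃ m : ℤ, (m : ℚ) = d * w := by
    refine IsIntegrallyClosed.isIntegral_iff.mp (.of_pow two_pos ?_)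
    rw [show (d * w) ^ 2 = ((d * n : ℤ) : ℚ) by push_cast; rw [← hw]; ring]
    exact isIntegral_algebraMap (R := ℤ)
  have hdvd : (d : ℤ) ∣ m ^ 2 :=
    ⟨n, by have : (m : ℚ) ^ 2 = d * n := by rw [hm, ← hw]; ring
           exact_mod_cast this⟩
  obtain ⟨b, rfl⟩ := ((Int.squarefree_natCast.mpr hd).dvd_pow_iff_dvd two_ne_zero).mp hdvd
  exact ⟨b, mul_left_cancel₀ hd₀ (by rw [← hm]; push_cast; rfl)⟩

lemma even_and_even_of_sq_add_mul_sq {d : ℕ} (hd : d % 4 = 1 ∨ d % 4 = 2) {m n k : ℤ}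
    (h : m ^ 2 + d * n ^ 2 = 4 * k) : Even m ∧ Even n := by
  have key : ∀ m n d : ZMod 4, (d = 1 ∨ d = 2) → m ^ 2 + d * n ^ 2 = 0 →
      2 * m = 0 ∧ 2 * n = 0 := by decide
  have hd' : (d : ZMod 4) = 1 ∨ (d : ZMod 4) = 2 := by
    rw [← ZMod.natCast_mod]; rcases hd with hd | hd <;> simp [hd]
  have h' : (m : ZMod 4) ^ 2 + d * (n : ZMod 4) ^ 2 = 0 := by
    have := congrArg (Int.cast : ℤ → ZMod 4) h
    push_cast at this
    rw [this, show (4 : ZMod 4) = 0 from rfl, zero_mul]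
  obtain ⟨hm, hn⟩ := key _ _ _ hd' h'
  have hm' := (ZMod.intCast_zmod_eq_zero_iff_dvd (2 * m) 4).mp (by exact_mod_cast hm)
  have hn' := (ZMod.intCast_zmod_eq_zero_iff_dvd (2 * n) 4).mp (by exact_mod_cast hn)
  exact ⟨even_iff_two_dvd.mpr (by lia), even_iff_two_dvd.mpr (by lia)⟩

lemma exists_int_eq_of_isIntegral_quadraticAlgebra {d : ℕ} (hsq : Squarefree d)
    (hd : d % 4 = 1 ∨ d % 4 = 2) {z : QuadraticAlgebra ℚ (-d) 0} (hz : IsIntegral ℤ z) :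
    ∃ m n : ℤ, z = ⟨m, n⟩ := by
  obtain ⟨A, hA⟩ := IsIntegrallyClosed.isIntegral_iff.mp (isIntegral_trace_quadraticAlgebra hz)
  obtain ⟨N, hN⟩ := IsIntegrallyClosed.isIntegral_iff.mp (isIntegral_norm_quadraticAlgebra hz)
  simp only [trace_def, norm_sqrtNeg, zero_mul, add_zero, algebraMap_int_eq, eq_intCast] at hA hN
  obtain ⟨B, hB⟩ := exists_int_eq_of_squarefree_mul_sq hsq (w := 2 * z.im) (n := 4 * N - A ^ 2)
    (by push_cast; rw [hA, hN]; ring)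
  have hAB : A ^ 2 + d * B ^ 2 = 4 * N := by
    have : (A : ℚ) ^ 2 + d * B ^ 2 = 4 * N := by rw [hA, hN, ← hB]; ring
    exact_mod_cast this
  obtain ⟨⟨m, rfl⟩, n, rfl⟩ := even_and_even_of_sq_add_mul_sq hd hAB
  push_cast at hA hB
  exact ⟨m, n, QuadraticAlgebra.ext (by linarith) (by linarith)⟩

lemma norm_sqrtNeg_eq_zero {R : Type*} [CommRing R] [LinearOrder R] [IsStrictOrderedRing R]
    {d : ℕ} (hd : 0 < d) (z : QuadraticAlgebra R (-d) 0) (hz : norm z = 0) : z = 0 := by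
  rw [norm_sqrtNeg] at hz
  have hd' : (0 : R) < d := by exact_mod_cast hd
  have him : z.im = 0 := by
    by_contra h
    have : 0 < z.im ^ 2 := by positivity
    nlinarith [sq_nonneg z.re]
  exact QuadraticAlgebra.ext (by simpa [him] using hz) him

open NumberField

section Generator

variable {K : Type*} [Field K] [CharZero K] {d : ℕ} {θ : K}

lemma exists_quadraticAlgebra_algEquiv (hd : 0 < d) (hθ : θ ^ 2 = -(d : K))
    (hgen : Algebra.adjoin ℚ {θ} = ⊤) :
    ∃ φ : QuadraticAlgebra ℚ (-d) 0 ≃ₐ[ℚ] K, φ ω = θ := by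
  let f : QuadraticAlgebra ℚ (-d) 0 →ₐ[ℚ] K :=
    QuadraticAlgebra.lift ⟨θ, by rw [← pow_two, hθ]; simp [Algebra.smul_def]⟩
  have hf : f ω = θ := by simp [f]
  have hinj : Function.Injective f :=
    injective_algHom_quadraticAlgebra (algebraMap ℚ K).injective (norm_sqrtNeg_eq_zero hd) f
  have hsurj : Function.Surjective f := by
    rw [← AlgHom.range_eq_top, eq_top_iff, ← hgen, Algebra.adjoin_le_iff, Set.singleton_subset_iff]
    exact ⟨ω, hf⟩
  exact ⟨AlgEquiv.ofBijective f ⟨hinj, hsurj⟩, hf⟩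

lemma nonempty_algEquiv_ringOfIntegers (hsq : Squarefree d) (hd : d % 4 = 1 ∨ d % 4 = 2)
    (hθ : θ ^ 2 = -(d : K)) (hgen : Algebra.adjoin ℚ {θ} = ⊤) :
    Nonempty (QuadraticAlgebra ℤ (-d) 0 ≃ₐ[ℤ] 𝓞 K) := by
  have hd₀ : 0 < d := hsq.ne_zero.bot_lt
  have hint : IsIntegral ℤ θ := .of_pow two_pos (by rw [hθ]; exact (isIntegral_natCast d).neg)
  obtain ⟨t, rfl⟩ : ∃ t : 𝓞 K, (t : K) = θ := ⟨⟨θ, hint⟩, rfl⟩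
  have ht : t * t = -(d : ℤ) • (1 : 𝓞 K) + (0 : ℤ) • t := by
    ext
    simpa [← pow_two] using hθ
  let f : QuadraticAlgebra ℤ (-d) 0 →ₐ[ℤ] 𝓞 K := QuadraticAlgebra.lift ⟨t, ht⟩
  have hinj : Function.Injective f :=
    injective_algHom_quadraticAlgebra (algebraMap ℤ (𝓞 K)).injective_int
      (norm_sqrtNeg_eq_zero hd₀) f
  refine ⟨AlgEquiv.ofBijective f ⟨hinj, fun x => ?_⟩⟩
  obtain ⟨φ, hφ⟩ := exists_quadraticAlgebra_algEquiv hd₀ hθ hgen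
  obtain ⟨m, n, hmn⟩ := exists_int_eq_of_isIntegral_quadraticAlgebra hsq hd
    (z := φ.symm x) (x.isIntegral_coe.map (φ.symm.restrictScalars ℤ))
  refine ⟨⟨m, n⟩, RingOfIntegers.ext ?_⟩
  have hx : (x : K) = (m : ℚ) • (1 : K) + (n : ℚ) • (t : K) := by
    rw [← φ.apply_symm_apply (x : K), hmn, mk_eq_add_smul_omega, map_add, map_smul, hφ,
      AlgEquiv.commutes, Algebra.algebraMap_eq_smul_one]
  rw [hx]
  simp [f, Algebra.smul_def]

end Generator

variable {d : ℕ}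

lemma sq_map_omega_sqrtNeg {A : Type*} [Ring A] (f : QuadraticAlgebra ℤ (-d) 0 →ₐ[ℤ] A) :
    f ω ^ 2 = -(d : A) := by
  rw [← map_pow, pow_two, omega_mul_omega_eq_algebraMap, map_zero, zero_mul, add_zero,
    AlgHom.commutes]
  simp

lemma unit_eq_one_or_neg_one (hd : 1 < d) (u : (QuadraticAlgebra ℤ (-d) 0)ˣ) : u = 1 ∨ u = -1 := by
  obtain ⟨z, hz⟩ : ∃ z : QuadraticAlgebra ℤ (-d) 0, z = u := ⟨_, rfl⟩
  have hnorm : z.re ^ 2 + d * z.im ^ 2 = 1 := by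
    rcases Int.isUnit_iff.mp (isUnit_iff_norm_isUnit.mp (hz ▸ u.isUnit)) with h | h <;>
      rw [norm_sqrtNeg] at h
    · exact h
    · have : 0 ≤ z.re ^ 2 + d * z.im ^ 2 := by positivity
      lia
  have him : z.im = 0 := by
    by_contra h
    have : 0 < z.im ^ 2 := by positivity
    nlinarith [sq_nonneg z.re]
  rw [him, zero_pow two_ne_zero, mul_zero, add_zero, sq_eq_one_iff] at hnorm
  refine hnorm.imp (fun h => Units.ext ?_) (fun h => Units.ext ?_)
  · rw [← hz]; exact QuadraticAlgebra.ext h him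
  · rw [← hz]; exact QuadraticAlgebra.ext h (by simpa using him)

variable {K : Type*} [Field K]

lemma isTotallyComplex_of_sq_eq_neg {θ : K} (hd : 0 < d)
    (hθ : θ ^ 2 = -(d : K)) : IsTotallyComplex K := by
  refine ⟨fun v => InfinitePlace.not_isReal_iff_isComplex.mp fun hv => ?_⟩
  have hsq : v.embedding_of_isReal hv θ ^ 2 = -(d : ℝ) := by
    rw [← map_pow, hθ, map_neg, map_natCast]
  have : (0 : ℝ) < d := by exact_mod_cast hd
  nlinarith [sq_nonneg (v.embedding_of_isReal hv θ)]

variable [NumberField K]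

lemma regulator_eq_one_of_card_eq_one (h : Fintype.card (InfinitePlace K) = 1) :
    Units.regulator K = 1 := by
  classical
  have : IsEmpty {w : InfinitePlace K // w ≠ Units.dirichletUnitTheorem.w₀} :=
    ⟨fun w => w.2 ((Fintype.card_le_one_iff.mp h.le) _ _)⟩
  rw [Units.regulator_eq_det', Matrix.det_isEmpty, abs_one]

section Invariants

variable (φ : QuadraticAlgebra ℤ (-d) 0 ≃ₐ[ℤ] 𝓞 K)
include φ

lemma discr_eq_neg_four_mul : discr K = -4 * d := by
  rw [← discr_eq_discr K ((basis _ _).map φ.toLinearEquiv), Module.Basis.coe_map]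
  exact (Algebra.discr_eq_discr_of_algEquiv (basis _ _) φ).symm.trans
    (discr_basis_quadraticAlgebra.trans (by ring))

lemma finrank_eq_two_of_algEquiv : Module.finrank ℚ K = 2 := by
  rw [← RingOfIntegers.rank, ← φ.toLinearEquiv.finrank_eq, finrank_eq_two]

lemma torsionOrder_eq_two_of_algEquiv (hd : 1 < d) : Units.torsionOrder K = 2 := by
  have hunits : ((Units.torsion K : Subgroup (𝓞 K)ˣ) : Set (𝓞 K)ˣ) ⊆ {1, -1} := by
    intro u _
    obtain ⟨z, rfl⟩ := (Units.mapEquiv φ.toMulEquiv).surjective u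
    rcases unit_eq_one_or_neg_one hd z with rfl | rfl
    · exact Or.inl (map_one _)
    · exact Or.inr (Units.ext (by simp))
  have hle : Units.torsionOrder K ≤ 2 :=
    (Set.ncard_le_ncard hunits).trans
      (Set.ncard_insert_le _ _ |>.trans_eq (by rw [Set.ncard_singleton]))
  exact hle.antisymm (Nat.le_of_dvd (Units.torsionOrder_pos K) (Units.even_torsionOrder K).two_dvd)

lemma dedekindZeta_residue_of_algEquiv (hd : 1 < d) :
    dedekindZeta_residue K = Real.pi * classNumber K / (2 * √d) := by
  have : IsTotallyComplex K := isTotallyComplex_of_sq_eq_neg (d := d) (θ := (φ ω : K)) (by lia) (by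
    rw [← map_pow]
    exact (congrArg (algebraMap (𝓞 K) K) (sq_map_omega_sqrtNeg φ.toAlgHom)).trans (by simp))
  have hr₂ : InfinitePlace.nrComplexPlaces K = 1 := by
    have := IsTotallyComplex.finrank (K := K)
    rw [finrank_eq_two_of_algEquiv φ] at this
    lia
  have hcard : Fintype.card (InfinitePlace K) = 1 := by
    rw [InfinitePlace.card_eq_nrRealPlaces_add_nrComplexPlaces, hr₂,
      IsTotallyComplex.nrRealPlaces_eq_zero]
  have hdisc : √|((-4 * d : ℤ) : ℝ)| = 2 * √d := by
    rw [show |((-4 * d : ℤ) : ℝ)| = 2 ^ 2 * d by push_cast; rw [abs_mul]; norm_num,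
      Real.sqrt_mul (by positivity), Real.sqrt_sq two_pos.le]
  rw [dedekindZeta_residue_def, IsTotallyComplex.nrRealPlaces_eq_zero, hr₂,
    regulator_eq_one_of_card_eq_one hcard, torsionOrder_eq_two_of_algEquiv φ hd,
    discr_eq_neg_four_mul φ, hdisc]
  have : 0 < √(d : ℝ) := Real.sqrt_pos.mpr (by exact_mod_cast (by lia : 0 < d))
  field_simp
  push_cast
  ring

end Invariants

end QuadraticAlgebra

section IdealCount

open Ideal

lemma span_natCast_sup_span_natCast {R : Type*} [CommRing R] {m n : ℕ} (h : m.Coprime n) :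
    span {(m : R)} ⊔ span {(n : R)} = ⊤ := by
  rw [← isCoprime_iff_sup_eq, isCoprime_span_singleton_iff]
  simpa using (Nat.isCoprime_iff_coprime.mpr h).map (Int.castRingHom R)

variable {R : Type*} [CommRing R] [IsDedekindDomain R] [Module.Free ℤ R]

/-- The number of ideals of `R` of norm `n`, i.e. the `n`-th coefficient of the Dedekind zeta
function when `R` is a ring of integers. -/
noncomputable def idealCount (R : Type*) [CommRing R] [IsDedekindDomain R] [Module.Free ℤ R]
    (n : ℕ) : ℕ :=
  Nat.card {I : Ideal R // absNorm I = n}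

lemma span_natCast_le_of_absNorm_eq {I : Ideal R} {n : ℕ} (hI : absNorm I = n) :
    span {(n : R)} ≤ I :=
  hI ▸ span_singleton_absNorm_le I

section Coprime

variable {m n : ℕ}

lemma mul_sup_span_natCast_of_coprime (h : m.Coprime n) {I J : Ideal R} (hI : absNorm I = m)
    (hJ : absNorm J = n) : I * J ⊔ span {(m : R)} = I := by
  refine (sup_le Ideal.mul_le_left (span_natCast_le_of_absNorm_eq hI)).antisymm ?_
  have htop : J ⊔ span {(m : R)} = ⊤ := by
    rw [eq_top_iff, ← span_natCast_sup_span_natCast h, sup_comm]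
    exact sup_le_sup_right (span_natCast_le_of_absNorm_eq hJ) _
  calc I = I * J ⊔ I * span {(m : R)} := by rw [← Ideal.mul_sup, htop, mul_top]
    _ ≤ I * J ⊔ span {(m : R)} := sup_le_sup_left Ideal.mul_le_right _

lemma sup_span_natCast_mul_sup_span_natCast (h : m.Coprime n) {I : Ideal R}
    (hI : absNorm I = m * n) : (I ⊔ span {(m : R)}) * (I ⊔ span {(n : R)}) = I := by
  refine le_antisymm ?_ ?_
  · rw [Ideal.sup_mul, Ideal.mul_sup, Ideal.mul_sup, span_singleton_mul_span_singleton]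
    refine sup_le (sup_le Ideal.mul_le_left Ideal.mul_le_left) (sup_le Ideal.mul_le_right ?_)
    exact_mod_cast span_natCast_le_of_absNorm_eq hI
  · rw [mul_eq_inf_of_coprime]
    · exact le_inf le_sup_left le_sup_left
    · rw [eq_top_iff, ← span_natCast_sup_span_natCast h]
      exact sup_le_sup le_sup_right le_sup_right

variable [Module.Finite ℤ R]

lemma coprime_absNorm_sup_span_natCast (h : m.Coprime n) (I : Ideal R) :
    (absNorm (I ⊔ span {(m : R)})).Coprime n := by
  refine Nat.Coprime.coprime_dvd_left ?_ (h.pow_left (Module.finrank ℤ R))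
  rw [← absNorm_span_natCast]
  exact absNorm_dvd_absNorm_of_le le_sup_right

lemma absNorm_sup_span_natCast (h : m.Coprime n) {I : Ideal R} (hI : absNorm I = m * n) :
    absNorm (I ⊔ span {(m : R)}) = m := by
  have hmul : absNorm (I ⊔ span {(m : R)}) * absNorm (I ⊔ span {(n : R)}) = m * n := by
    rw [← map_mul, sup_span_natCast_mul_sup_span_natCast h hI, hI]
  exact Nat.dvd_antisymm
    ((coprime_absNorm_sup_span_natCast h I).dvd_of_dvd_mul_right ⟨_, hmul.symm⟩)
    ((coprime_absNorm_sup_span_natCast h.symm I).symm.dvd_of_dvd_mul_right ⟨_, hmul⟩)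

lemma idealCount_mul_of_coprime (h : m.Coprime n) :
    idealCount R (m * n) = idealCount R m * idealCount R n := by
  rw [idealCount, idealCount, idealCount, ← Nat.card_prod]
  exact Nat.card_congr
    { toFun I := (⟨I ⊔ span {(m : R)}, absNorm_sup_span_natCast h I.2⟩,
        ⟨I ⊔ span {(n : R)}, absNorm_sup_span_natCast h.symm (by rw [I.2, mul_comm])⟩)
      invFun IJ := ⟨IJ.1 * IJ.2, by rw [map_mul, IJ.1.2, IJ.2.2]⟩
      left_inv I := Subtype.ext (sup_span_natCast_mul_sup_span_natCast h I.2)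
      right_inv IJ := Prod.ext
        (Subtype.ext (mul_sup_span_natCast_of_coprime h IJ.1.2 IJ.2.2))
        (Subtype.ext ((congrArg (· ⊔ span {(n : R)}) (mul_comm _ _)).trans
          (mul_sup_span_natCast_of_coprime h.symm IJ.2.2 IJ.1.2))) }

end Coprime

section PrimePower

variable {q : ℕ} {P Q : Ideal R}

lemma dvd_span_pow_of_absNorm_eq_pow {I : Ideal R} {k : ℕ} (hI : absNorm I = q ^ k) :
    I ∣ span {(q : R)} ^ k := by
  rw [dvd_iff_le, span_singleton_pow]
  exact_mod_cast span_natCast_le_of_absNorm_eq hI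

lemma prime_of_absNorm_eq_prime (hq : q.Prime) (hP : absNorm P = q) : Prime P := by
  refine prime_of_isPrime ?_ (isPrime_of_irreducible_absNorm (hP ▸ hq))
  rintro rfl
  exact hq.ne_zero (hP ▸ absNorm_bot)

lemma exists_pow_mul_pow_of_absNorm_eq_pow (hq : q.Prime) (hP : absNorm P = q)
    (hQ : absNorm Q = q) (hPQ : P * Q = span {(q : R)}) {k : ℕ} {I : Ideal R}
    (hI : absNorm I = q ^ k) : ∃ i j, i + j = k ∧ P ^ i * Q ^ j = I := by
  have hdvd := dvd_span_pow_of_absNorm_eq_pow hI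
  rw [← hPQ, mul_pow] at hdvd
  obtain ⟨A, B, hA, hB, rfl⟩ := exists_dvd_and_dvd_of_dvd_mul hdvd
  obtain ⟨i, -, hi⟩ := (dvd_prime_pow (prime_of_absNorm_eq_prime hq hP) _).mp hA
  obtain ⟨j, -, hj⟩ := (dvd_prime_pow (prime_of_absNorm_eq_prime hq hQ) _).mp hB
  obtain rfl := associated_iff_eq.mp hi
  obtain rfl := associated_iff_eq.mp hj
  rw [map_mul, map_pow, map_pow, hP, hQ, ← pow_add] at hI
  exact ⟨i, j, Nat.pow_right_injective hq.two_le hI, rfl⟩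

lemma le_of_prime_pow_mul_eq {M : Type*} [CommMonoidWithZero M] [IsCancelMulZero M] {P A B : M}
    (hP : Prime P) (hA : ¬P ∣ A) {i j : ℕ} (h : P ^ i * A = P ^ j * B) : j ≤ i :=
  (pow_dvd_pow_iff hP.ne_zero hP.not_isUnit).mp
    (hP.pow_dvd_of_dvd_mul_right j hA ⟨B, h⟩)

variable [Module.Finite ℤ R]

lemma idealCount_prime_pow_of_inert (hR : Module.finrank ℤ R = 2) (hq : q.Prime)
    (hqR : Prime (q : R)) (k : ℕ) : idealCount R (q ^ k) = if Even k then 1 else 0 := by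
  have hP : Prime (span {(q : R)}) :=
    prime_of_isPrime (by simpa using hqR.ne_zero) ((span_singleton_prime hqR.ne_zero).mpr hqR)
  have hnorm (i : ℕ) : absNorm (span {(q : R)} ^ i) = q ^ (2 * i) := by
    rw [map_pow, absNorm_span_natCast, hR, pow_mul]
  have hpow {I : Ideal R} (hI : absNorm I = q ^ k) : ∃ i, 2 * i = k ∧ I = span {(q : R)} ^ i := by
    obtain ⟨i, -, hi⟩ := (dvd_prime_pow hP k).mp (dvd_span_pow_of_absNorm_eq_pow hI)
    obtain rfl := associated_iff_eq.mp hi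
    exact ⟨i, Nat.pow_right_injective hq.two_le ((hnorm i).symm.trans hI), rfl⟩
  rw [idealCount]
  split_ifs with hk
  · obtain ⟨j, rfl⟩ := hk
    rw [Nat.card_eq_one_iff_unique]
    refine ⟨⟨fun I J => Subtype.ext ?_⟩, ⟨⟨span {(q : R)} ^ j, by rw [hnorm, two_mul]⟩⟩⟩
    obtain ⟨i, hi, hI⟩ := hpow I.2
    obtain ⟨i', hi', hJ⟩ := hpow J.2
    rw [hI, hJ, show i = i' by lia]
  · rw [Nat.card_eq_zero]
    refine Or.inl ⟨fun I => ?_⟩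
    obtain ⟨i, hi, -⟩ := hpow I.2
    exact hk (hi ▸ even_two_mul i)

lemma idealCount_prime_pow_of_ramified (hR : Module.finrank ℤ R = 2) (hq : q.Prime)
    (hP : P ^ 2 = span {(q : R)}) (k : ℕ) : idealCount R (q ^ k) = 1 := by
  have hNP : absNorm P = q :=
    Nat.pow_left_injective two_ne_zero (by
      change absNorm P ^ 2 = q ^ 2
      rw [← map_pow, hP, absNorm_span_natCast, hR])
  have hpow {I : Ideal R} (hI : absNorm I = q ^ k) : I = P ^ k := by
    have hdvd := dvd_span_pow_of_absNorm_eq_pow hI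
    rw [← hP, ← pow_mul] at hdvd
    obtain ⟨i, -, hi⟩ := (dvd_prime_pow (prime_of_absNorm_eq_prime hq hNP) _).mp hdvd
    obtain rfl := associated_iff_eq.mp hi
    rw [map_pow, hNP] at hI
    rw [Nat.pow_right_injective hq.two_le hI]
  rw [idealCount, Nat.card_eq_one_iff_unique]
  exact ⟨⟨fun I J => Subtype.ext (by rw [hpow I.2, hpow J.2])⟩,
    ⟨⟨P ^ k, by rw [map_pow, hNP]⟩⟩⟩

lemma idealCount_prime_pow_of_split (hR : Module.finrank ℤ R = 2) (hq : q.Prime)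
    (hPQ : P * Q = span {(q : R)}) (hne : P ≠ Q) (hP : P ≠ ⊤) (hQ : Q ≠ ⊤) (k : ℕ) :
    idealCount R (q ^ k) = k + 1 := by
  obtain ⟨hNP, hNQ⟩ : absNorm P = q ∧ absNorm Q = q := by
    rw [← hq.mul_eq_prime_sq_iff (absNorm_eq_one_iff.not.mpr hP) (absNorm_eq_one_iff.not.mpr hQ),
      ← map_mul, hPQ, absNorm_span_natCast, hR]
  have hPprime := prime_of_absNorm_eq_prime hq hNP
  have hPQpow (j : ℕ) : ¬P ∣ Q ^ j := fun h => hne <| associated_iff_eq.mp <|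
    hPprime.associated_of_dvd (prime_of_absNorm_eq_prime hq hNQ) (hPprime.dvd_of_dvd_pow h)
  let f (x : Finset.HasAntidiagonal.antidiagonal k) : {I : Ideal R // absNorm I = q ^ k} :=
    ⟨P ^ x.1.1 * Q ^ x.1.2, by
      rw [map_mul, map_pow, map_pow, hNP, hNQ, ← pow_add,
        Finset.HasAntidiagonal.mem_antidiagonal.mp x.2]⟩
  have hf : Function.Bijective f := by
    refine ⟨fun x y hxy => Subtype.ext ?_, fun ⟨I, hI⟩ => ?_⟩
    · have h : P ^ x.1.1 * Q ^ x.1.2 = P ^ y.1.1 * Q ^ y.1.2 := congrArg Subtype.val hxy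
      exact Finset.HasAntidiagonal.antidiagonal_congr x.2 y.2 |>.mpr
        ((le_of_prime_pow_mul_eq hPprime (hPQpow _) h.symm).antisymm
          (le_of_prime_pow_mul_eq hPprime (hPQpow _) h))
    · obtain ⟨i, j, hij, hPQI⟩ := exists_pow_mul_pow_of_absNorm_eq_pow hq hNP hNQ hPQ hI
      exact ⟨⟨(i, j), Finset.HasAntidiagonal.mem_antidiagonal.mpr hij⟩, Subtype.ext hPQI⟩
  rw [idealCount, ← Nat.card_congr (Equiv.ofBijective f hf), Nat.card_eq_fintype_card,
    Fintype.card_coe, Finset.Nat.card_antidiagonal]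

end PrimePower

/-- The completely multiplicative function `X` records the decomposition of rational primes in
`R`, as for the character of a quadratic field: `X q` is `0`, `1` or `-1` according as `q`
ramifies, splits or is inert. -/
def IsSplittingCharacter (R : Type*) [CommRing R] (X : ℕ →*₀ ℤ) : Prop :=
  ∀ q : ℕ, q.Prime →
    (X q = 0 ∧ ∃ P : Ideal R, P ^ 2 = span {(q : R)}) ∨
    (X q = 1 ∧ ∃ P Q : Ideal R, P * Q = span {(q : R)} ∧ P ≠ Q ∧ P ≠ ⊤ ∧ Q ≠ ⊤) ∨
    (X q = -1 ∧ Prime (q : R))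

variable {X : ℕ →*₀ ℤ}

lemma IsSplittingCharacter.of_ringEquiv {R S : Type*} [CommRing R] [CommRing S] (φ : R ≃+* S)
    (hX : IsSplittingCharacter R X) : IsSplittingCharacter S X := by
  intro q hq
  have hspan : (span {(q : R)}).map φ = span {(q : S)} := by
    rw [map_span, Set.image_singleton, map_natCast]
  have hinj : Function.Injective (Ideal.map φ) := fun I J h => by
    rw [← comap_map_of_bijective φ φ.bijective (I := I), h, comap_map_of_bijective φ φ.bijective]
  have htop {I : Ideal R} (hI : I ≠ ⊤) : I.map φ ≠ ⊤ := Ideal.map_top φ ▸ hinj.ne hI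
  refine (hX q hq).imp (And.imp_right ?_) (Or.imp (And.imp_right ?_) (And.imp_right ?_))
  · rintro ⟨P, hP⟩
    exact ⟨P.map φ, by rw [← Ideal.map_pow, hP, hspan]⟩
  · rintro ⟨P, Q, hPQ, hne, hP, hQ⟩
    exact ⟨P.map φ, Q.map φ, by rw [← Ideal.map_mul, hPQ, hspan], hinj.ne hne, htop hP, htop hQ⟩
  · intro h
    rwa [← map_natCast φ, MulEquiv.prime_iff φ]

lemma IsSplittingCharacter.abs_le_one {R : Type*} [CommRing R] (hX : IsSplittingCharacter R X)
    (n : ℕ) : |X n| ≤ 1 := by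
  induction n using Nat.recOnMul with
  | zero => simp
  | one => simp
  | prime q hq => rcases hX q hq with ⟨h, -⟩ | ⟨h, -⟩ | ⟨h, -⟩ <;> simp [h]
  | mul m n hm hn =>
    rw [map_mul, abs_mul]
    exact mul_le_one₀ hm (abs_nonneg _) hn

lemma sum_divisors_mul_of_coprime (X : ℕ →*₀ ℤ) {m n : ℕ} (h : m.Coprime n) :
    ∑ e ∈ (m * n).divisors, X e = (∑ e ∈ m.divisors, X e) * ∑ e ∈ n.divisors, X e := by
  let f : ArithmeticFunction ℤ := ⟨X, map_zero X⟩
  have hf : f.IsMultiplicative := ⟨map_one X, fun _ => map_mul X _ _⟩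
  have hmul := (ArithmeticFunction.isMultiplicative_zeta.natCast.mul hf).map_mul_of_coprime h
  simp only [ArithmeticFunction.coe_zeta_mul_apply] at hmul
  exact hmul

variable [Module.Finite ℤ R]

lemma IsSplittingCharacter.idealCount_prime_pow (hX : IsSplittingCharacter R X)
    (hR : Module.finrank ℤ R = 2) {q : ℕ} (hq : q.Prime) (k : ℕ) :
    (idealCount R (q ^ k) : ℤ) = ∑ e ∈ (q ^ k).divisors, X e := by
  rw [Nat.sum_divisors_prime_pow hq]
  simp only [map_pow]
  rcases hX q hq with ⟨h, P, hP⟩ | ⟨h, P, Q, hPQ, hne, hP, hQ⟩ | ⟨h, hP⟩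
  · rw [idealCount_prime_pow_of_ramified hR hq hP, h, zero_geom_sum]
    simp
  · rw [idealCount_prime_pow_of_split hR hq hPQ hne hP hQ, h]
    simp
  · rw [idealCount_prime_pow_of_inert hR hq hP, h, neg_one_geom_sum]
    by_cases hk : Even k <;> simp [Nat.even_add_one, hk]

lemma IsSplittingCharacter.idealCount_eq_sum_divisors (hX : IsSplittingCharacter R X)
    (hR : Module.finrank ℤ R = 2) {n : ℕ} (hn : n ≠ 0) :
    (idealCount R n : ℤ) = ∑ e ∈ n.divisors, X e := by
  induction n using Nat.recOnPrimeCoprime with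
  | zero => exact absurd rfl hn
  | prime_pow q k hq => exact hX.idealCount_prime_pow hR hq k
  | coprime m n hm hn h ihm ihn =>
    rw [idealCount_mul_of_coprime h, sum_divisors_mul_of_coprime X h, Nat.cast_mul,
      ihm (by lia), ihn (by lia)]

end IdealCount

section Decomposition

open QuadraticAlgebra Ideal

section SquareRoot

variable {R : Type*} [CommRing R]

lemma span_pair_mul_span_pair_eq_span_singleton {q u v w : R} (huv : u * v = q * w)
    (h : ∃ a b c e, a * q + b * u + c * v + e * w = 1) :
    span {q, u} * span {q, v} = span {q} := by
  obtain ⟨a, b, c, e, h⟩ := h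
  rw [span_pair_mul_span_pair]
  apply le_antisymm
  · simp only [span_le, Set.insert_subset_iff, Set.singleton_subset_iff, SetLike.mem_coe,
      mem_span_singleton]
    exact ⟨dvd_mul_right q q, dvd_mul_right q v, dvd_mul_left q u, ⟨w, huv⟩⟩
  · have hq : q = a * (q * q) + c * (q * v) + b * (u * q) + e * (u * v) := by
      linear_combination -q * h + e * (-huv)
    rw [span_singleton_le_iff_mem, hq]
    refine add_mem (add_mem (add_mem ?_ ?_) ?_) ?_ <;>
      exact Ideal.mul_mem_left _ _ (subset_span (by simp [← hq]))

variable {d q : ℕ} {t : R}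

lemma exists_sq_eq_span_of_dvd (hsq : Squarefree d) (hqd : q ∣ d) (ht : t ^ 2 = -(d : R)) :
    ∃ P : Ideal R, P ^ 2 = span {(q : R)} := by
  obtain ⟨e, rfl⟩ := hqd
  obtain ⟨x, y, hxy⟩ := (Nat.isCoprime_iff_coprime.mpr
    (Nat.coprime_of_squarefree_mul hsq)).map (Int.castRingHom R)
  refine ⟨span {(q : R), t}, (pow_two _).trans
    (span_pair_mul_span_pair_eq_span_singleton (w := -(e : R)) ?_ ⟨x, 0, 0, -y, ?_⟩)⟩
  · rw [← pow_two, ht]; push_cast; ring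
  · simp only [map_natCast] at hxy
    linear_combination hxy

lemma exists_sq_eq_span_two (hd : d % 4 = 1) (ht : t ^ 2 = -(d : R)) :
    ∃ P : Ideal R, P ^ 2 = span {(2 : R)} := by
  obtain ⟨k, rfl⟩ : ∃ k, d = 4 * k + 1 := ⟨d / 4, by lia⟩
  push_cast at ht
  exact ⟨span {2, 1 + t}, (pow_two _).trans (span_pair_mul_span_pair_eq_span_singleton
    (w := t - 2 * k) (by linear_combination ht) ⟨-k, 1, 0, -1, by ring⟩)⟩

variable {b : ℤ}

lemma span_pair_add_mul_span_pair_sub (hb : (q : ℤ) ∣ b ^ 2 + d) (hqb : IsCoprime (q : ℤ) (2 * b))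
    (ht : t ^ 2 = -(d : R)) : span {(q : R), b + t} * span {(q : R), b - t} = span {(q : R)} := by
  obtain ⟨e, he⟩ := hb
  obtain ⟨x, y, hxy⟩ := hqb.map (Int.castRingHom R)
  replace he := congrArg (Int.cast : ℤ → R) he
  simp only [eq_intCast] at hxy
  push_cast at he hxy
  exact span_pair_mul_span_pair_eq_span_singleton (w := (e : R)) (by linear_combination he - ht)
    ⟨x, y, y, 0, by linear_combination hxy⟩

lemma span_pair_add_eq_top_of_eq (hqb : IsCoprime (q : ℤ) (2 * b))
    (h : span {(q : R), b + t} = span {(q : R), b - t}) : span {(q : R), b + t} = ⊤ := by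
  obtain ⟨x, y, hxy⟩ := hqb.map (Int.castRingHom R)
  simp only [eq_intCast] at hxy
  push_cast at hxy
  have hmem : (b : R) - t ∈ span {(q : R), b + t} := h ▸ subset_span (by simp)
  rw [eq_top_iff_one, show (1 : R) = x * q + y * ((b + t) + (b - t)) by linear_combination -hxy]
  exact add_mem (Ideal.mul_mem_left _ _ (subset_span (by simp)))
    (Ideal.mul_mem_left _ _ (add_mem (subset_span (by simp)) hmem))

end SquareRoot

variable {d : ℕ}

lemma natCast_dvd_iff (q : ℕ) (z : QuadraticAlgebra ℤ (-d) 0) :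
    (q : QuadraticAlgebra ℤ (-d) 0) ∣ z ↔ (q : ℤ) ∣ z.re ∧ (q : ℤ) ∣ z.im := by
  simpa using algebraMap_dvd_iff (r := (q : ℤ)) (z := z)

lemma exists_mul_eq_span_of_dvd_sq_add {q : ℕ} (hq : q.Prime) {b : ℤ} (hb : (q : ℤ) ∣ b ^ 2 + d)
    (hqb : ¬(q : ℤ) ∣ 2 * b) : ∃ P Q : Ideal (QuadraticAlgebra ℤ (-d) 0),
      P * Q = span {(q : QuadraticAlgebra ℤ (-d) 0)} ∧ P ≠ Q ∧ P ≠ ⊤ ∧ Q ≠ ⊤ := by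
  have hq' : Prime (q : ℤ) := Nat.prime_iff_prime_int.mp hq
  have hcop : IsCoprime (q : ℤ) (2 * b) := hq'.coprime_iff_not_dvd.mpr hqb
  obtain ⟨t, ht, him⟩ : ∃ t : QuadraticAlgebra ℤ (-d) 0, t ^ 2 = -(d : _) ∧ t.im = 1 :=
    ⟨ω, sq_map_omega_sqrtNeg (AlgHom.id ℤ _), omega_im⟩
  have hPQ := span_pair_add_mul_span_pair_sub hb hcop ht
  have hnotMem {z : QuadraticAlgebra ℤ (-d) 0} (hz : IsUnit z.im) : z ∉ span {↑q} := fun h =>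
    hq'.not_isUnit (isUnit_of_dvd_unit ((natCast_dvd_iff q z).mp (mem_span_singleton.mp h)).2 hz)
  have hP : span {↑q, b + t} ≠ ⊤ := fun h => by
    refine hnotMem (z := b - t) (by simp [him]) ?_
    rw [← hPQ, h, top_mul]
    exact subset_span (by simp)
  have hQ : span {↑q, b - t} ≠ ⊤ := fun h => by
    refine hnotMem (z := b + t) (by simp [him]) ?_
    rw [← hPQ, h, mul_top]
    exact subset_span (by simp)
  exact ⟨_, _, hPQ, fun h => hP (span_pair_add_eq_top_of_eq hcop h), hP, hQ⟩

lemma prime_natCast_of_legendreSym_eq_neg_one {q : ℕ} [Fact q.Prime]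
    (h : legendreSym q (-d) = -1) : Prime (q : QuadraticAlgebra ℤ (-d) 0) := by
  have hq : Prime (q : ℤ) := Nat.prime_iff_prime_int.mp Fact.out
  have hdvd {z : QuadraticAlgebra ℤ (-d) 0} (hz : (q : ℤ) ∣ norm z) :
      (q : QuadraticAlgebra ℤ (-d) 0) ∣ z := by
    rw [natCast_dvd_iff]
    refine legendreSym.prime_dvd_of_eq_neg_one h ?_
    rwa [neg_mul, sub_neg_eq_add, ← norm_sqrtNeg]
  refine ⟨by exact_mod_cast hq.ne_zero, fun hu => ?_, fun z w hzw => ?_⟩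
  · exact hq.not_dvd_one ((natCast_dvd_iff q 1).mp hu.dvd).1
  · have hnorm : (q : ℤ) ∣ norm z * norm w := by
      rw [← map_mul]
      obtain ⟨v, hv⟩ := hzw
      rw [hv, map_mul, QuadraticAlgebra.norm_natCast]
      exact dvd_mul_of_dvd_left (dvd_pow_self _ two_ne_zero) _
    exact (hq.dvd_or_dvd hnorm).imp hdvd hdvd

/-- `X` is the Kronecker symbol `n ↦ (-4d / n)`, the character of `ℚ(√-d)` when `-4d` is a
fundamental discriminant. As `X` is completely multiplicative, its values at primes determine it. -/
def IsKroneckerSymbol (d : ℕ) (X : ℕ →*₀ ℤ) : Prop :=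
  ∀ (q : ℕ) [Fact q.Prime], X q = if q ∣ 2 * d then 0 else legendreSym q (-d)

variable {X : ℕ →*₀ ℤ}

theorem IsKroneckerSymbol.isSplittingCharacter (hX : IsKroneckerSymbol d X) (hsq : Squarefree d)
    (hd : d % 4 = 1 ∨ d % 4 = 2) : IsSplittingCharacter (QuadraticAlgebra ℤ (-d) 0) X := by
  intro q hq
  have := Fact.mk hq
  have hω := sq_map_omega_sqrtNeg (AlgHom.id ℤ (QuadraticAlgebra ℤ (-d) 0))
  rw [hX q]
  split_ifs with hqd
  · refine Or.inl ⟨rfl, ?_⟩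
    by_cases h : q ∣ d
    · exact exists_sq_eq_span_of_dvd hsq h hω
    · obtain rfl := (Nat.prime_dvd_prime_iff_eq hq Nat.prime_two).mp
        ((hq.dvd_mul.mp hqd).resolve_right h)
      exact_mod_cast exists_sq_eq_span_two (by lia : d % 4 = 1) hω
  have hd₀ : ((-d : ℤ) : ZMod q) ≠ 0 := by
    rw [Ne, ZMod.intCast_zmod_eq_zero_iff_dvd, dvd_neg, Int.natCast_dvd_natCast]
    exact fun h => hqd (h.mul_left 2)
  rcases legendreSym.eq_one_or_neg_one q hd₀ with h | h
  · obtain ⟨b, hb⟩ := (legendreSym.eq_one_iff q hd₀).mp h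
    obtain ⟨b, rfl⟩ := ZMod.intCast_surjective b
    have hqb : (q : ℤ) ∣ b ^ 2 + d := by
      rw [← ZMod.intCast_zmod_eq_zero_iff_dvd]
      push_cast at hb ⊢
      linear_combination -hb
    refine Or.inr (Or.inl ⟨h, exists_mul_eq_span_of_dvd_sq_add hq hqb fun h2b => hqd ?_⟩)
    rw [hq.dvd_mul]
    have hq' := Nat.prime_iff_prime_int.mp hq
    refine (hq'.dvd_or_dvd h2b).imp (fun h => by exact_mod_cast h) fun h => ?_
    exact_mod_cast (dvd_add_right (h.trans (dvd_pow_self b two_ne_zero))).mp hqb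
  · exact Or.inr (Or.inr ⟨h, prime_natCast_of_legendreSym_eq_neg_one h⟩)

end Decomposition


section ClassNumberFormula

open NumberField

variable {K : Type*} [Field K] [NumberField K] {X : ℕ →*₀ ℤ}

lemma IsSplittingCharacter.dedekindZeta_eq (hX : IsSplittingCharacter (𝓞 K) X)
    (hK : Module.finrank ℚ K = 2) {s : ℂ} (hs : 1 < s.re) :
    dedekindZeta K s = riemannZeta s * LSeries (fun n => (X n : ℂ)) s := by
  have hsummable : LSeriesSummable (fun n => (X n : ℂ)) s := by
    refine LSeriesSummable_of_bounded_of_one_lt_re (m := 1) (fun n _ => ?_) hs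
    rw [Complex.norm_intCast]
    exact_mod_cast hX.abs_le_one n
  rw [← LSeries_one_eq_riemannZeta hs, ← LSeries_convolution' (LSeriesSummable_one_iff.mpr hs)
    hsummable, dedekindZeta]
  refine LSeries_congr (fun {n} hn => ?_) _
  simp only [LSeries.convolution_def, Pi.one_apply, one_mul]
  rw [Nat.sum_divisorsAntidiagonal' (fun _ j => (X j : ℂ))]
  exact_mod_cast congrArg (Int.cast : ℤ → ℂ)
    (hX.idealCount_eq_sum_divisors ((RingOfIntegers.rank K).trans hK) hn)

lemma tendsto_ofReal_sub_one_mul_riemannZeta :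
    Tendsto (fun s : ℝ => ((s : ℂ) - 1) * riemannZeta s) (𝓝[>] 1) (𝓝 1) := by
  refine riemannZeta_residue_one.comp (tendsto_nhdsWithin_iff.mpr ⟨?_, ?_⟩)
  · simpa using (Complex.continuous_ofReal.tendsto 1).mono_left nhdsWithin_le_nhds
  · filter_upwards [self_mem_nhdsWithin] with s hs
    exact Set.mem_compl_singleton_iff.mpr (by exact_mod_cast (Set.mem_Ioi.mp hs).ne')

lemma IsSplittingCharacter.dedekindZeta_residue_eq (hX : IsSplittingCharacter (𝓞 K) X)
    (hK : Module.finrank ℚ K = 2) {l : ℝ}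
    (hl : Tendsto (fun s : ℝ => LSeries (fun n => (X n : ℂ)) s) (𝓝[>] 1) (𝓝 l)) :
    dedekindZeta_residue K = l := by
  have hmul := tendsto_ofReal_sub_one_mul_riemannZeta.mul hl
  rw [one_mul] at hmul
  refine Complex.ofReal_injective
    (tendsto_nhds_unique (tendsto_sub_one_mul_dedekindZeta_nhdsGT K) (hmul.congr' ?_))
  filter_upwards [self_mem_nhdsWithin] with s hs
  rw [hX.dedekindZeta_eq hK (by simpa using hs), mul_assoc]

theorem IsKroneckerSymbol.pi_mul_classNumber_div_eq {d : ℕ} (hX : IsKroneckerSymbol d X)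
    (hd₁ : 1 < d) (hsq : Squarefree d) (hd : d % 4 = 1 ∨ d % 4 = 2) {θ : K}
    (hθ : θ ^ 2 = -(d : K)) (hgen : Algebra.adjoin ℚ {θ} = ⊤) {l : ℝ}
    (hl : Tendsto (fun s : ℝ => LSeries (fun n => (X n : ℂ)) s) (𝓝[>] 1) (𝓝 l)) :
    Real.pi * classNumber K / (2 * √d) = l := by
  obtain ⟨φ⟩ := nonempty_algEquiv_ringOfIntegers hsq hd hθ hgen
  rw [← dedekindZeta_residue_of_algEquiv φ hd₁]
  exact ((hX.isSplittingCharacter hsq hd).of_ringEquiv φ.toRingEquiv).dedekindZeta_residue_eq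
    (finrank_eq_two_of_algEquiv φ) hl

end ClassNumberFormula

section KroneckerSymbol

/-- The completely multiplicative function `n ↦ χ(n)` on `ℕ` induced by a character `χ`. -/
def restrictNat {R : Type*} [CommRing R] [Nontrivial R] (χ : MulChar R ℤ) : ℕ →*₀ ℤ :=
  χ.toMonoidWithZeroHom.comp (Nat.castRingHom R).toMonoidWithZeroHom

instance : Nontrivial (ZMod 4) := inferInstanceAs (Nontrivial (Fin 4))

instance : Nontrivial (ZMod 8) := inferInstanceAs (Nontrivial (Fin 8))

lemma restrictNat_mod {N : ℕ} [Nontrivial (ZMod N)] (χ : MulChar (ZMod N) ℤ) (n : ℕ) :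
    restrictNat χ (n % N) = restrictNat χ n :=
  congrArg χ (ZMod.natCast_mod n N)

lemma isKroneckerSymbol_χ₄ : IsKroneckerSymbol 1 (restrictNat ZMod.χ₄) := by
  intro q hq
  have hq₂ : q ∣ 2 * 1 ↔ q = 2 := Nat.prime_dvd_prime_iff_eq hq.out Nat.prime_two
  split_ifs with h
  · rw [hq₂.mp h]
    rfl
  · exact (legendreSym.at_neg_one (mt hq₂.mpr h)).symm

lemma isKroneckerSymbol_χ₈' : IsKroneckerSymbol 2 (restrictNat ZMod.χ₈') := by
  intro q hq
  have hq₂ : q ∣ 2 * 2 ↔ q = 2 := by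
    rw [hq.out.dvd_mul, or_self, Nat.prime_dvd_prime_iff_eq hq.out Nat.prime_two]
  split_ifs with h
  · rw [hq₂.mp h]
    rfl
  · exact (legendreSym.at_neg_two (mt hq₂.mpr h)).symm

lemma mul_restrictNat_quadraticChar_apply (p : ℕ) [Fact p.Prime] (X : ℕ →*₀ ℤ) (n : ℕ) :
    (X * restrictNat (quadraticChar (ZMod p))) n = X n * legendreSym p n := by
  rw [legendreSym, Int.cast_natCast]
  rfl

variable {m p : ℕ} [Fact p.Prime] {X : ℕ →*₀ ℤ}

lemma IsKroneckerSymbol.mul_legendreSym (hX : IsKroneckerSymbol m X) (hp : p % 4 = 1) :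
    IsKroneckerSymbol (m * p) (X * restrictNat (quadraticChar (ZMod p))) := by
  intro q hq
  have hdvd : q ∣ 2 * (m * p) ↔ q ∣ 2 * m ∨ q = p := by
    rw [← mul_assoc, hq.out.dvd_mul, Nat.prime_dvd_prime_iff_eq hq.out (Fact.out : p.Prime)]
  rw [mul_restrictNat_quadraticChar_apply, hX q]
  simp only [hdvd]
  rcases em (q ∣ 2 * m) with hqm | hqm
  · rw [if_pos hqm, if_pos (Or.inl hqm), zero_mul]
  rcases eq_or_ne q p with rfl | hqp
  · rw [if_pos (Or.inr rfl), (legendreSym.eq_zero_iff q q).mpr (by simp), mul_zero]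
  · have hq₂ : q ≠ 2 := by
      rintro rfl
      exact hqm (dvd_mul_right 2 m)
    rw [if_neg hqm, if_neg (by tauto), Nat.cast_mul, ← neg_mul, legendreSym.mul,
      legendreSym.quadratic_reciprocity_one_mod_four hp hq₂]

end KroneckerSymbol

section FiniteSums

open NumberField

lemma sin_two_pi_mul_div_mul_mod {N : ℕ} (hN : N ≠ 0) (c n : ℕ) :
    Real.sin (2 * Real.pi * (c / N) * (n % N : ℕ)) = Real.sin (2 * Real.pi * (c / N) * n) := by
  have hN' : (N : ℝ) ≠ 0 := by exact_mod_cast hN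
  rw [← Real.sin_add_nat_mul_two_pi _ (c * (n / N))]
  congr 1
  conv_rhs => rw [← Nat.mod_add_div n N]
  push_cast
  field_simp

variable {m p N : ℕ} [Fact p.Prime] {X : ℕ →*₀ ℤ} {S : Finset ℕ}

lemma LSeries_mul_legendreSym {g : ℝ} (hp : p ≠ 2) (hg : quadraticGaussSum p = g) (hg₀ : g ≠ 0)
    {r : ℝ} (hr : r ≠ 0)
    (hX : ∀ n : ℕ, ∑ c ∈ S, Real.sin (2 * Real.pi * (c / N) * n) = r * X n)
    {s : ℂ} (hs : 1 < s.re) :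
    LSeries (fun n => ((X * restrictNat (quadraticChar (ZMod p))) n : ℂ)) s =
      (∑ c ∈ S, ∑ j ∈ Finset.range p,
        legendreSym p j * HurwitzZeta.sinZeta (c / N + j / p : ℝ) s) / (r * g) := by
  have hsum := (hasSum_sum fun c (_ : c ∈ S) =>
    hasSum_legendreSym_mul_sin hp hg hg₀ (c / N) hs).div_const (r : ℂ)
  rw [← Finset.sum_div, div_div, mul_comm (g : ℂ)] at hsum
  refine LSeriesHasSum.LSeries_eq (hsum.congr_fun fun n => ?_)
  have hr' : (r : ℂ) ≠ 0 := Complex.ofReal_ne_zero.mpr hr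
  have hn : (r * (X n * legendreSym p n) : ℂ) =
      ∑ c ∈ S, ((legendreSym p n * Real.sin (2 * Real.pi * (c / N) * n) : ℝ) : ℂ) := by
    rw [← Complex.ofReal_sum, ← Finset.mul_sum, hX]
    push_cast
    ring
  rw [LSeries.term_def₀ (by simp), Complex.cpow_neg, ← div_eq_mul_inv, ← Finset.sum_div, ← hn,
    mul_restrictNat_quadraticChar_apply, Int.cast_mul]
  field_simp

theorem tendsto_LSeries_mul_legendreSym {g : ℝ} (hp : p % 4 = 1) (hg : quadraticGaussSum p = g)
    (hg₀ : g ≠ 0) (hN : p.Coprime N) (hS : ∀ c ∈ S, 0 < c ∧ c < N) {r : ℝ} (hr : r ≠ 0)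
    (hX : ∀ n : ℕ, ∑ c ∈ S, Real.sin (2 * Real.pi * (c / N) * n) = r * X n) :
    Tendsto (fun s : ℝ => LSeries (fun n => ((X * restrictNat (quadraticChar (ZMod p))) n : ℂ)) s)
      (𝓝[>] 1) (𝓝 (Real.pi * (∑ c ∈ S, legendreSum p (p * c / N) : ℤ) / (r * g) : ℝ)) := by
  have hlim : Tendsto (fun s : ℝ => (∑ c ∈ S, ∑ j ∈ Finset.range p,
      legendreSym p j * HurwitzZeta.sinZeta (c / N + j / p : ℝ) s) / (r * g : ℂ)) (𝓝[>] 1)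
      (𝓝 ((∑ c ∈ S, Real.pi * (legendreSum p (p * c / N) : ℂ)) / (r * g))) := by
    refine (tendsto_finsetSum _ fun c hc => ?_).div_const _
    obtain ⟨hc₀, hcN⟩ := hS c hc
    have hN₀ : (0 : ℝ) < N := by exact_mod_cast hc₀.trans hcN
    have hmul : (p * (c / N) : ℝ) = (p * c : ℕ) / N := by push_cast; ring
    have hfract : Int.fract (p * (c / N) : ℝ) ≠ 0 := by
      rw [hmul, Int.fract_div_natCast_eq_div_natCast_mod]
      have hdvd : ¬N ∣ p * c := fun h =>
        Nat.not_dvd_of_pos_of_lt hc₀ hcN (hN.symm.dvd_of_dvd_mul_left h)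
      exact div_ne_zero (Nat.cast_ne_zero.mpr (mt Nat.dvd_of_mod_eq_zero hdvd)) hN₀.ne'
    have hy : (c / N : ℝ) ∈ Set.Ioo 0 1 :=
      ⟨div_pos (Nat.cast_pos.mpr hc₀) hN₀, (div_lt_one hN₀).mpr (Nat.cast_lt.mpr hcN)⟩
    rw [← Nat.floor_div_eq_div (K := ℝ), ← hmul]
    exact tendsto_sum_legendreSym_mul_sinZeta hp hy hfract
  rw [← Finset.mul_sum] at hlim
  push_cast
  refine hlim.congr' ?_
  filter_upwards [self_mem_nhdsWithin] with s hs
  rw [LSeries_mul_legendreSym (by rintro rfl; lia) hg hg₀ hr hX (by simpa using hs)]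

theorem IsKroneckerSymbol.classNumber_eq {K : Type*} [Field K] [NumberField K]
    (hX : IsKroneckerSymbol m X) (hsq : Squarefree (m * p)) (hm : m * p % 4 = 1 ∨ m * p % 4 = 2)
    (hp : p % 4 = 1) (hN : p.Coprime N) (hS : ∀ c ∈ S, 0 < c ∧ c < N)
    (hsin : ∀ n : ℕ, ∑ c ∈ S, Real.sin (2 * Real.pi * (c / N) * n) = √m * X n) {θ : K}
    (hθ : θ ^ 2 = -((m * p : ℕ) : K)) (hgen : Algebra.adjoin ℚ {θ} = ⊤) :
    classNumber K = 2 * (∑ c ∈ S, legendreSum p (p * c / N)).natAbs := by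
  obtain ⟨g, hgp, hg⟩ := exists_abs_eq_sqrt_and_quadraticGaussSum_eq p hp
  have hm₀ : 0 < m := Nat.pos_of_ne_zero (left_ne_zero_of_mul hsq.ne_zero)
  have hsqrt_p : 0 < √(p : ℝ) := Real.sqrt_pos.mpr (Nat.cast_pos.mpr (Fact.out : p.Prime).pos)
  have hsqrt_m : 0 < √(m : ℝ) := Real.sqrt_pos.mpr (Nat.cast_pos.mpr hm₀)
  have hg₀ : g ≠ 0 := abs_pos.mp (hgp ▸ hsqrt_p)
  have hmp : 1 < m * p := (Fact.out : p.Prime).one_lt.trans_le (Nat.le_mul_of_pos_left p hm₀)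
  have hformula := (hX.mul_legendreSym hp).pi_mul_classNumber_div_eq hmp hsq hm hθ hgen
    (tendsto_LSeries_mul_legendreSym hp hg hg₀ hN hS hsqrt_m.ne' hsin)
  replace hformula := congrArg abs hformula
  rw [abs_div, abs_div, abs_mul, abs_mul, abs_mul, abs_mul, hgp, Nat.cast_mul,
    Real.sqrt_mul (Nat.cast_nonneg m), abs_mul, abs_of_pos hsqrt_m, abs_of_pos hsqrt_p,
    abs_of_pos Real.pi_pos, Nat.abs_cast, Nat.abs_ofNat, ← Int.cast_abs, Int.abs_eq_natAbs,
    Int.cast_natCast] at hformula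
  field_simp at hformula
  exact_mod_cast hformula

end FiniteSums

section QuadraticFields

open NumberField

lemma sin_two_pi_div_four_mul (n : ℕ) :
    Real.sin (2 * Real.pi * (1 / 4) * n) = restrictNat ZMod.χ₄ n := by
  have hmod := sin_two_pi_mul_div_mul_mod four_ne_zero 1 n
  have hlt := n.mod_lt four_pos
  have hχ₁ : restrictNat ZMod.χ₄ 1 = 1 := rfl
  have hχ₂ : restrictNat ZMod.χ₄ 2 = 0 := rfl
  have hχ₃ : restrictNat ZMod.χ₄ 3 = -1 := rfl
  push_cast at hmod
  rw [← restrictNat_mod, ← hmod]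
  interval_cases n % 4
  · simp
  · rw [hχ₁, show 2 * Real.pi * (1 / 4) * (1 : ℕ) = Real.pi / 2 by ring, Real.sin_pi_div_two,
      Int.cast_one]
  · rw [hχ₂, show 2 * Real.pi * (1 / 4) * (2 : ℕ) = Real.pi by ring, Real.sin_pi, Int.cast_zero]
  · rw [hχ₃, show 2 * Real.pi * (1 / 4) * (3 : ℕ) = Real.pi / 2 + Real.pi by ring,
      Real.sin_add_pi, Real.sin_pi_div_two]
    simp

lemma sin_two_pi_div_eight_mul_add (n : ℕ) :
    Real.sin (2 * Real.pi * (1 / 8) * n) + Real.sin (2 * Real.pi * (3 / 8) * n) =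
      √2 * restrictNat ZMod.χ₈' n := by
  have hmod := sin_two_pi_mul_div_mul_mod (by norm_num : 8 ≠ 0) 1 n
  have hmod₃ := sin_two_pi_mul_div_mul_mod (by norm_num : 8 ≠ 0) 3 n
  have hlt := n.mod_lt (by norm_num : 8 > 0)
  push_cast at hmod hmod₃
  rw [← restrictNat_mod, ← hmod, ← hmod₃]
  generalize n % 8 = r at hlt ⊢
  rw [Real.sin_add_sin, show (2 * Real.pi * (1 / 8) * r + 2 * Real.pi * (3 / 8) * r) / 2 =
      2 * Real.pi * (1 / 4) * r by ring, sin_two_pi_div_four_mul,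
    show (2 * Real.pi * (1 / 8) * r - 2 * Real.pi * (3 / 8) * r) / 2 = -(r * (Real.pi / 4)) by ring,
    Real.cos_neg]
  have hcos₃ : Real.cos (3 * (Real.pi / 4)) = -(√2 / 2) := by
    rw [show 3 * (Real.pi / 4) = Real.pi - Real.pi / 4 by ring, Real.cos_pi_sub,
      Real.cos_pi_div_four]
  have hcos₅ : Real.cos (5 * (Real.pi / 4)) = -(√2 / 2) := by
    rw [show 5 * (Real.pi / 4) = Real.pi / 4 + Real.pi by ring, Real.cos_add_pi,
      Real.cos_pi_div_four]
  have hcos₇ : Real.cos (7 * (Real.pi / 4)) = √2 / 2 := by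
    rw [show 7 * (Real.pi / 4) = 2 * Real.pi - Real.pi / 4 by ring, Real.cos_two_pi_sub,
      Real.cos_pi_div_four]
  have h₄ : List.map (restrictNat ZMod.χ₄) [0, 1, 2, 3, 4, 5, 6, 7] =
      [0, 1, 0, -1, 0, 1, 0, -1] := rfl
  have h₈ : List.map (restrictNat ZMod.χ₈') [0, 1, 2, 3, 4, 5, 6, 7] =
      [0, 1, 0, 1, 0, -1, 0, -1] := rfl
  simp only [List.map_cons, List.cons.injEq] at h₄ h₈
  interval_cases r <;> simp [h₄, h₈, hcos₃, hcos₅, hcos₇, mul_div_cancel₀]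

variable {p : ℕ} [Fact p.Prime] {K : Type*} [Field K] [NumberField K] {θ : K}

theorem classNumber_eq_of_sq_eq_neg_prime (hp : p % 4 = 1) (hθ : θ ^ 2 = -(p : K))
    (hgen : Algebra.adjoin ℚ {θ} = ⊤) : classNumber K = 2 * (legendreSum p (p / 4)).natAbs := by
  have hcop : p.Coprime 4 := (Nat.coprime_primes Fact.out Nat.prime_two).mpr (by rintro rfl; lia)
    |>.pow_right 2
  simpa using isKroneckerSymbol_χ₄.classNumber_eq (p := p) (N := 4) (S := {1})
    (by simpa using (Fact.out : p.Prime).squarefree) (by lia) hp hcop (by simp)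
    (by simpa using sin_two_pi_div_four_mul) (by simpa using hθ) hgen

theorem classNumber_eq_of_sq_eq_neg_two_mul_prime (hp : p % 4 = 1) (hθ : θ ^ 2 = -(2 * (p : K)))
    (hgen : Algebra.adjoin ℚ {θ} = ⊤) :
    classNumber K = 2 * (legendreSum p (p / 8) + legendreSum p (3 * p / 8)).natAbs := by
  have hcop : p.Coprime 2 := (Nat.coprime_primes Fact.out Nat.prime_two).mpr (by rintro rfl; lia)
  have hsq : Squarefree (2 * p) := (Nat.squarefree_mul hcop.symm).mpr
    ⟨Nat.prime_two.squarefree, (Fact.out : p.Prime).squarefree⟩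
  simpa [mul_comm p 3] using isKroneckerSymbol_χ₈'.classNumber_eq (p := p) (N := 8) (S := {1, 3})
    hsq (by lia) hp (hcop.pow_right 3) (by simp)
    (by simpa using sin_two_pi_div_eight_mul_add) (by simpa using hθ) hgen

end QuadraticFields

theorem glaisher_class_numbers (p : ℕ) (hp : p.Prime) (h8 : p % 8 = 1)
    (K K' : Type) [Field K] [NumberField K] [Field K'] [NumberField K']
    (α : K) (hα : α ^ 2 = -(p : K)) (hKgen : Algebra.adjoin ℚ {α} = ⊤)
    (β : K') (hβ : β ^ 2 = -(2 * (p : K'))) (hK'gen : Algebra.adjoin ℚ {β} = ⊤) :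
    (p % 16 = 1 →
      (8 ∣ NumberField.classNumber K ↔ 8 ∣ NumberField.classNumber K')) ∧
    (p % 16 = 9 →
      Xor' (8 ∣ NumberField.classNumber K) (8 ∣ NumberField.classNumber K')) := by
  have := Fact.mk hp
  have h4 : p % 4 = 1 := by lia
  exact eight_dvd_iff_of_eq_two_mul_legendreSum p h8
    (classNumber_eq_of_sq_eq_neg_prime h4 hα hKgen)
    (classNumber_eq_of_sq_eq_neg_two_mul_prime h4 hβ hK'gen)
end

section
/- For every nonnegative integer k, writing n = 8k+1, the following equality of integers holds: the number of pairs (x,y) ∈ ℤ² with n = x² + 16y², x > 0, and either (x ≡ ±1 (mod 8) and y even) or (x ≡ ±3 (mod 8) and y odd), minus the number of pairs (x,y) ∈ ℤ² with n = x² + 16y², x > 0, and either (x ≡ ±3 (mod 8) and y even) or (x ≡ ±1 (mod 8) and y odd), equals the number of pairs (x,y) ∈ ℤ² with n = x² + 8y², x > 0, and y even, minus the number of pairs (x,y) ∈ ℤ² with n = x² + 8y², x > 0, and y odd. -/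
/-!
Put `φ(q) = ∑ q ^ (n ^ 2)` and `ψ(q) = ∑ q ^ (2 * n ^ 2 + n)`, sums over all integers `n`. Since
`8 * k + 1 = (4 * m + 1) ^ 2 + 8 * c * y ^ 2` says `k = c * y ^ 2 + (2 * m ^ 2 + m)`, the two sides
of the theorem are the coefficients of `q ^ k` in `φ(-q ^ 2) ψ(-q)` (`c = 2`) and in `φ(-q) ψ(q)`
(`c = 1`): the residue of `±(4 * m + 1)` modulo 8 sees the parity of `m`. These products agree up to
sign because their squares do, by the classical identities `φ(q) φ(-q) = φ(-q ^ 2) ^ 2` and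
`ψ(±q) ^ 2 = φ(±q) ψ(q ^ 2)`; and the sign is right because both start with `1`.
-/

open HahnSeries

theorem ncard_sub_ncard_eq_finsum_units {α : Type*} {s : Set α} (hs : s.Finite) (u : α → ℤˣ) :
    ({a | a ∈ s ∧ u a = 1}.ncard : ℤ) - {a | a ∈ s ∧ u a = -1}.ncard = ∑ᶠ a ∈ s, (u a : ℤ) := by
  lift s to Finset α using hs
  rw [finsum_mem_coe_finset]
  simp only [Finset.mem_coe, ← Finset.coe_filter, Set.ncard_coe_finset, Finset.card_filter,
    Nat.cast_sum, ← Finset.sum_sub_distrib]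
  refine Finset.sum_congr rfl fun a _ => ?_
  rcases Int.units_eq_one_or (u a) with h | h <;> simp [h]

theorem units_zpow_eq_of_even_sub (ε : ℤˣ) {m n : ℤ} (h : Even (m - n)) : ε ^ m = ε ^ n := by
  obtain ⟨t, ht⟩ := h
  rw [show m = n + (t + t) by omega, zpow_add, zpow_add, Int.units_mul_self, mul_one]

theorem hsum_eq_of_add_equiv_eq_embDomain {Γ R α β : Type*} [PartialOrder Γ] [AddCommMonoid R]
    [IsAddTorsionFree R] {s : SummableFamily Γ R α} {t : SummableFamily Γ R β} (e : α ≃ α)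
    (f : β ↪ α) (h : s + .Equiv e s = (t + t).embDomain f) : s.hsum = t.hsum := by
  have hsum := congrArg SummableFamily.hsum h
  rw [SummableFamily.hsum_add, SummableFamily.hsum_equiv, SummableFamily.hsum_embDomain,
    SummableFamily.hsum_add, ← two_nsmul, ← two_nsmul] at hsum
  ext g
  exact nsmul_right_injective two_ne_zero (congrArg (coeff · g) hsum)

theorem abs_le_quadratic {a b : ℤ} (h : |b| < a) (n : ℤ) : |n| ≤ a * n ^ 2 + b * n := by
  have hb : -(|b| * |n|) ≤ b * n := by simpa only [abs_mul] using neg_abs_le (b * n)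
  have hn : |n| ≤ n ^ 2 := by simpa only [sq_abs] using Int.le_self_sq |n|
  nlinarith [abs_nonneg n, abs_nonneg b]

/-- The terms `ε ^ n * q ^ (a * n ^ 2 + b * n)`, for `n : ℤ`, of a theta series with signs, as
Laurent series in `q`; taking exponents in `ℤ` lets them be written as polynomials in `n`. -/
noncomputable def thetaFamily (ε : ℤˣ) (a b : ℤ) (h : |b| < a := by norm_num) :
    SummableFamily ℤ ℤ ℤ where
  toFun n := single (a * n ^ 2 + b * n) ((ε ^ n : ℤˣ) : ℤ)
  isPWO_iUnion_support' := by
    refine (BddBelow.isWF ⟨0, ?_⟩).isPWO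
    rintro _ ⟨_, ⟨n, rfl⟩, hn⟩
    rw [support_single_subset hn]
    exact (abs_nonneg n).trans (abs_le_quadratic h n)
  finite_co_support' g := by
    refine (Set.finite_Icc (-g) g).subset fun n hn => abs_le.1 ?_
    rw [eq_of_mem_support_single hn]
    exact abs_le_quadratic h n

/-- The theta series `∑ n : ℤ, ε ^ n * q ^ (a * n ^ 2 + b * n)`. With `ε = ±1`, Ramanujan's `φ(εq)`
is `theta ε 1 0` and his `ψ(εq)` is `theta ε 2 1`; also `φ(-q ^ 2)` is `theta (-1) 2 0` and
`ψ(q ^ 2)` is `theta 1 4 2`. -/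
noncomputable def theta (ε : ℤˣ) (a b : ℤ) (h : |b| < a := by norm_num) : ℤ⟦ℤ⟧ :=
  (thetaFamily ε a b h).hsum

theorem leadingCoeff_theta {ε : ℤˣ} {a b : ℤ} (h : |b| < a) :
    (theta ε a b h).leadingCoeff = 1 := by
  have leading_term : thetaFamily ε a b h 0 = single 0 1 := by simp [thetaFamily]
  rw [theta, SummableFamily.hsum_leadingCoeff_of_le (g := 0) (a := 0), leading_term,
    coeff_single_same]
  · rw [leading_term, orderTop_single one_ne_zero]
  · intro n g hg
    rw [support_single_subset hg]
    exact (abs_nonneg n).trans (abs_le_quadratic h n)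
  · exact fun n hn => coeff_single_of_ne ((abs_pos.2 hn).trans_le (abs_le_quadratic h n)).ne

section Products

variable {ε δ : ℤˣ} {a b c d : ℤ} (h : |b| < a) (h' : |d| < c)

theorem thetaFamily_mul_apply (p : ℤ × ℤ) :
    (thetaFamily ε a b h).mul (thetaFamily δ c d h') p =
      single (a * p.1 ^ 2 + b * p.1 + (c * p.2 ^ 2 + d * p.2)) ((ε ^ p.1 * δ ^ p.2 : ℤˣ) : ℤ) :=
  single_mul_single.trans (by rw [Units.val_mul])

theorem coeff_theta_mul_theta (n : ℤ) :
    (theta ε a b h * theta δ c d h').coeff n =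
      ∑ᶠ p ∈ {p : ℤ × ℤ | a * p.1 ^ 2 + b * p.1 + (c * p.2 ^ 2 + d * p.2) = n},
        ((ε ^ p.1 * δ ^ p.2 : ℤˣ) : ℤ) := by
  rw [theta, theta, ← SummableFamily.hsum_mul, SummableFamily.coeff_hsum]
  refine finsum_congr fun p => ?_
  rw [thetaFamily_mul_apply, finsum_eq_if, coeff_single]
  simp only [Set.mem_ofPred_eq, eq_comm (a := n)]

include h h' in
theorem finite_setOf_quadratic_add_quadratic_eq (n : ℤ) :
    {p : ℤ × ℤ | a * p.1 ^ 2 + b * p.1 + (c * p.2 ^ 2 + d * p.2) = n}.Finite := by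
  refine (((thetaFamily 1 a b h).mul (thetaFamily 1 c d h')).finite_co_support n).subset ?_
  rintro p rfl
  rw [Function.mem_support, thetaFamily_mul_apply, coeff_single_same]
  exact Units.ne_zero _

end Products

/-- The substitution `(x, y) ↦ (x + y, x - y)`, which turns `2 * x ^ 2 + 2 * y ^ 2` into a sum of
two squares of the same parity. -/
def sumDiff : ℤ × ℤ ↪ ℤ × ℤ where
  toFun p := (p.1 + p.2, p.1 - p.2)
  inj' p q h := by
    simp only [Prod.mk.injEq] at h
    ext <;> omega

theorem mem_range_sumDiff_of_even_sub {p : ℤ × ℤ} (h : Even (p.1 - p.2)) :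
    p ∈ Set.range sumDiff := by
  obtain ⟨t, ht⟩ := h
  exact ⟨(p.2 + t, t), Prod.ext (show p.2 + t + t = p.1 by omega) (add_sub_cancel_right _ _)⟩

theorem thetaFamily_mul_sumDiff (p : ℤ × ℤ) :
    (thetaFamily 1 1 0).mul (thetaFamily (-1) 1 0) (sumDiff p) =
      (thetaFamily (-1) 2 0).mul (thetaFamily (-1) 2 0) p := by
  obtain ⟨x, y⟩ := p
  have signs : (1 : ℤˣ) ^ (x + y) * (-1) ^ (x - y) = (-1) ^ x * (-1) ^ y := by
    rw [one_zpow, one_mul, ← zpow_add]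
    exact units_zpow_eq_of_even_sub (-1) ⟨-y, by ring⟩
  rw [show sumDiff (x, y) = (x + y, x - y) from rfl, thetaFamily_mul_apply, thetaFamily_mul_apply,
    signs]
  ring_nf

theorem thetaFamily_mul_swap_sumDiff (p : ℤ × ℤ) :
    (thetaFamily 1 1 0).mul (thetaFamily (-1) 1 0) (sumDiff p).swap =
      (thetaFamily (-1) 2 0).mul (thetaFamily (-1) 2 0) p := by
  obtain ⟨x, y⟩ := p
  have signs : (1 : ℤˣ) ^ (x - y) * (-1) ^ (x + y) = (-1) ^ x * (-1) ^ y := by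
    rw [one_zpow, one_mul, zpow_add]
  rw [show (sumDiff (x, y)).swap = (x - y, x + y) from rfl, thetaFamily_mul_apply,
    thetaFamily_mul_apply, signs]
  ring_nf

theorem thetaFamily_mul_add_swap_eq_zero {p : ℤ × ℤ} (h : Odd (p.1 - p.2)) :
    (thetaFamily 1 1 0).mul (thetaFamily (-1) 1 0) p +
      (thetaFamily 1 1 0).mul (thetaFamily (-1) 1 0) p.swap = 0 := by
  have opposite_signs : (-1 : ℤˣ) ^ p.1 = -(-1) ^ p.2 := by
    rw [← sub_add_cancel p.1 p.2, zpow_add, h.neg_one_zpow, neg_one_mul]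
  simp only [thetaFamily_mul_apply, Prod.fst_swap, Prod.snd_swap, one_zpow, one_mul,
    opposite_signs, Units.val_neg, single_neg]
  ring_nf

theorem theta_one_mul_theta_neg_one : theta 1 1 0 * theta (-1) 1 0 = theta (-1) 2 0 ^ 2 := by
  simp only [theta, sq, ← SummableFamily.hsum_mul]
  refine hsum_eq_of_add_equiv_eq_embDomain (Equiv.prodComm ℤ ℤ) sumDiff ?_
  ext1 p
  rw [SummableFamily.add_apply, SummableFamily.Equiv_toFun, Equiv.prodComm_symm,
    Equiv.prodComm_apply]
  by_cases hp : p ∈ Set.range sumDiff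
  · obtain ⟨p, rfl⟩ := hp
    rw [SummableFamily.embDomain_image, SummableFamily.add_apply, thetaFamily_mul_sumDiff,
      thetaFamily_mul_swap_sumDiff]
  · rw [SummableFamily.embDomain_of_notMem_range _ _ hp]
    exact thetaFamily_mul_add_swap_eq_zero
      (Int.not_even_iff_odd.1 fun h => hp (mem_range_sumDiff_of_even_sub h))

/-- The substitution `(a, b) ↦ (a - b, m)` where `m` is determined by `a + b = 2 * m` or
`a + b = -1 - 2 * m`. The value of `s * (s + 1)` is the same at `s = 2 * m` and `s = -1 - 2 * m`,
so it turns `(2 * a ^ 2 + a) + (2 * b ^ 2 + b) = (a - b) ^ 2 + (a + b) * (a + b + 1)` into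
`x ^ 2 + (4 * m ^ 2 + 2 * m)`. -/
def subFoldAdd : ℤ × ℤ ≃ ℤ × ℤ where
  toFun p := (p.1 - p.2, if Even (p.1 + p.2) then (p.1 + p.2) / 2 else (-1 - (p.1 + p.2)) / 2)
  invFun p := if Even p.1 then (p.2 + p.1 / 2, p.2 - p.1 / 2)
    else ((p.1 - 1) / 2 - p.2, -1 - (p.1 - 1) / 2 - p.2)
  left_inv p := by ext <;> simp only [Int.even_iff] <;> split_ifs <;> dsimp only <;> omega
  right_inv p := by ext <;> simp only [Int.even_iff] <;> split_ifs <;> dsimp only at * <;> omega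

theorem add_eq_two_mul_subFoldAdd_or (p : ℤ × ℤ) :
    p.1 + p.2 = 2 * (subFoldAdd p).2 ∨ p.1 + p.2 = -1 - 2 * (subFoldAdd p).2 := by
  simp only [subFoldAdd, Equiv.coe_fn_mk, Int.even_iff]
  split_ifs <;> omega

theorem theta_two_one_sq (ε : ℤˣ) : theta ε 2 1 ^ 2 = theta ε 1 0 * theta 1 4 2 := by
  have reindex : (thetaFamily ε 2 1).mul (thetaFamily ε 2 1) =
      .Equiv subFoldAdd.symm ((thetaFamily ε 1 0).mul (thetaFamily 1 4 2)) := by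
    ext1 ⟨a, b⟩
    rw [SummableFamily.Equiv_toFun, thetaFamily_mul_apply, thetaFamily_mul_apply, Equiv.symm_symm,
      one_zpow, mul_one, ← zpow_add, show (subFoldAdd (a, b)).1 = a - b from rfl,
      units_zpow_eq_of_even_sub ε (n := a - b) ⟨b, by ring⟩]
    congr 2
    rcases add_eq_two_mul_subFoldAdd_or (a, b) with h | h
    · linear_combination (a + b + 2 * (subFoldAdd (a, b)).2 + 1) * h
    · linear_combination (a + b - 2 * (subFoldAdd (a, b)).2) * h
  simp only [theta, ← SummableFamily.hsum_mul, reindex, SummableFamily.hsum_equiv, sq]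

theorem theta_neg_one_two_mul_theta_neg_one :
    theta (-1) 2 0 * theta (-1) 2 1 = theta (-1) 1 0 * theta 1 2 1 := by
  have hsq : (theta (-1) 2 0 * theta (-1) 2 1) ^ 2 = (theta (-1) 1 0 * theta 1 2 1) ^ 2 := by
    simp only [mul_pow, theta_two_one_sq, ← theta_one_mul_theta_neg_one]
    ring
  refine (sq_eq_sq_iff_eq_or_eq_neg.1 hsq).resolve_right fun hneg => ?_
  have : (1 : ℤ) = -1 := by
    simpa only [leadingCoeff_neg, leadingCoeff_mul, leadingCoeff_theta, mul_one] using
      congrArg leadingCoeff hneg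
  norm_num at this

/-- The map `(y, m) ↦ (x, y)` with `x = |4 * m + 1|`, which carries the solutions of
`k = c * y ^ 2 + (2 * m ^ 2 + m)` to those of `8 * k + 1 = x ^ 2 + 8 * c * y ^ 2` with `x > 0`. -/
def completeSquare (p : ℤ × ℤ) : ℤ × ℤ :=
  (|4 * p.2 + 1|, p.1)

theorem completeSquare_injective : Function.Injective completeSquare := by
  rintro ⟨y, m⟩ ⟨z, l⟩ h
  simp only [completeSquare, Prod.mk.injEq] at h ⊢
  rcases abs_eq_abs.1 h.1 with h' | h' <;> omega

theorem exists_abs_four_mul_add_one_eq {x : ℤ} (hx : 0 < x) (hodd : Odd x) :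
    ∃ m, |4 * m + 1| = x := by
  have : x % 4 = 1 ∨ x % 4 = 3 := by
    have := Int.odd_iff.1 hodd
    omega
  rcases this with h | h
  · exact ⟨(x - 1) / 4, by rw [abs_of_pos] <;> omega⟩
  · exact ⟨(-x - 1) / 4, by rw [abs_of_neg] <;> omega⟩

theorem setOf_eq_image_completeSquare (k c : ℤ) (P : ℤ × ℤ → Prop) :
    {p : ℤ × ℤ | 8 * k + 1 = p.1 ^ 2 + 8 * c * p.2 ^ 2 ∧ 0 < p.1 ∧ P p} =
      completeSquare ''
        {p | c * p.1 ^ 2 + (2 * p.2 ^ 2 + p.2) = k ∧ P (completeSquare p)} := by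
  ext ⟨x, y⟩
  constructor
  · rintro ⟨h, hx, hP⟩
    dsimp only at h hx
    have hodd : Odd (x ^ 2) := ⟨4 * (k - c * y ^ 2), by linear_combination -h⟩
    obtain ⟨m, rfl⟩ := exists_abs_four_mul_add_one_eq hx ((Int.odd_pow' two_ne_zero).1 hodd)
    rw [sq_abs] at h
    exact ⟨(y, m), ⟨by linarith, hP⟩, rfl⟩
  · rintro ⟨⟨z, m⟩, ⟨h, hP⟩, heq⟩
    obtain ⟨rfl, rfl⟩ := Prod.mk.inj heq
    refine ⟨?_, abs_pos.2 (by omega), hP⟩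
    rw [sq_abs]
    linear_combination -8 * h

theorem ncard_sub_ncard_eq_coeff_theta_mul_theta (k : ℤ) {c d : ℤ} (hc : |0| < c) (hd : d = 8 * c)
    {ε δ : ℤˣ} {P Q : ℤ × ℤ → Prop} (hP : ∀ y m, P (|4 * m + 1|, y) ↔ ε ^ y * δ ^ m = 1)
    (hQ : ∀ y m, Q (|4 * m + 1|, y) ↔ ε ^ y * δ ^ m = -1) :
    ({p : ℤ × ℤ | 8 * k + 1 = p.1 ^ 2 + d * p.2 ^ 2 ∧ 0 < p.1 ∧ P p}.ncard : ℤ) -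
      {p : ℤ × ℤ | 8 * k + 1 = p.1 ^ 2 + d * p.2 ^ 2 ∧ 0 < p.1 ∧ Q p}.ncard =
      (theta ε c 0 hc * theta δ 2 1).coeff k := by
  rw [coeff_theta_mul_theta, ← ncard_sub_ncard_eq_finsum_units
    (finite_setOf_quadratic_add_quadratic_eq hc (by norm_num) k), hd,
    setOf_eq_image_completeSquare, setOf_eq_image_completeSquare,
    Set.ncard_image_of_injective _ completeSquare_injective,
    Set.ncard_image_of_injective _ completeSquare_injective]
  simp only [completeSquare, hP, hQ, Set.mem_ofPred_eq, zero_mul, add_zero, one_mul]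

theorem abs_four_mul_add_one_modEq_one_or_neg_one_iff (m : ℤ) :
    (|4 * m + 1| ≡ 1 [ZMOD 8] ∨ |4 * m + 1| ≡ -1 [ZMOD 8]) ↔ Even m := by
  simp only [Int.ModEq, Int.even_iff]
  rcases abs_choice (4 * m + 1) with h | h <;> omega

theorem abs_four_mul_add_one_modEq_three_or_neg_three_iff (m : ℤ) :
    (|4 * m + 1| ≡ 3 [ZMOD 8] ∨ |4 * m + 1| ≡ -3 [ZMOD 8]) ↔ Odd m := by
  simp only [Int.ModEq, Int.odd_iff]
  rcases abs_choice (4 * m + 1) with h | h <;> omega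

theorem threefield_count_kaplansky (k : ℕ) :
    (({pr : ℤ × ℤ | (8 * k + 1 : ℤ) = pr.1 ^ 2 + 16 * pr.2 ^ 2 ∧ 0 < pr.1 ∧
        (((pr.1 ≡ 1 [ZMOD 8] ∨ pr.1 ≡ -1 [ZMOD 8]) ∧ Even pr.2) ∨
          ((pr.1 ≡ 3 [ZMOD 8] ∨ pr.1 ≡ -3 [ZMOD 8]) ∧ Odd pr.2))}.ncard : ℤ) -
      ({pr : ℤ × ℤ | (8 * k + 1 : ℤ) = pr.1 ^ 2 + 16 * pr.2 ^ 2 ∧ 0 < pr.1 ∧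
        (((pr.1 ≡ 3 [ZMOD 8] ∨ pr.1 ≡ -3 [ZMOD 8]) ∧ Even pr.2) ∨
          ((pr.1 ≡ 1 [ZMOD 8] ∨ pr.1 ≡ -1 [ZMOD 8]) ∧ Odd pr.2))}.ncard : ℤ)) =
    (({pr : ℤ × ℤ | (8 * k + 1 : ℤ) = pr.1 ^ 2 + 8 * pr.2 ^ 2 ∧ 0 < pr.1 ∧
        Even pr.2}.ncard : ℤ) -
      ({pr : ℤ × ℤ | (8 * k + 1 : ℤ) = pr.1 ^ 2 + 8 * pr.2 ^ 2 ∧ 0 < pr.1 ∧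
        Odd pr.2}.ncard : ℤ)) := by
  rw [ncard_sub_ncard_eq_coeff_theta_mul_theta k (c := 2) (ε := -1) (δ := -1) (by norm_num)
      (by norm_num),
    ncard_sub_ncard_eq_coeff_theta_mul_theta k (c := 1) (ε := -1) (δ := 1) (by norm_num)
      (by norm_num)]
  · exact congrArg (coeff · (k : ℤ)) theta_neg_one_two_mul_theta_neg_one
  · intro y m
    rw [one_zpow, mul_one, ← Int.negOnePow_def, Int.negOnePow_eq_one_iff]
  · intro y m
    rw [one_zpow, mul_one, ← Int.negOnePow_def, Int.negOnePow_eq_neg_one_iff]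
  · intro y m
    rw [abs_four_mul_add_one_modEq_one_or_neg_one_iff,
      abs_four_mul_add_one_modEq_three_or_neg_three_iff, ← zpow_add, ← Int.negOnePow_def,
      Int.negOnePow_eq_one_iff, Int.even_add, ← Int.not_even_iff_odd, ← Int.not_even_iff_odd]
    tauto
  · intro y m
    rw [abs_four_mul_add_one_modEq_one_or_neg_one_iff,
      abs_four_mul_add_one_modEq_three_or_neg_three_iff, ← zpow_add, ← Int.negOnePow_def,
      Int.negOnePow_eq_neg_one_iff]
    simp only [← Int.not_even_iff_odd, Int.even_add]
    tauto
end

section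
/- For every nonnegative integer k, writing n = 4k+1, the following equality of integers holds: 2 times [ the number of pairs (x,y) ∈ ℤ² with n = x² + y², x > 0, x odd, and x + 3y ≡ ±1 (mod 5), minus the number of pairs (x,y) ∈ ℤ² with n = x² + y², x > 0, x odd, and x + 3y ≡ ±2 (mod 5) ] equals the number of pairs (x,y) ∈ ℤ² with n = x² + 5y², x odd and y even, minus the number of pairs (x,y) ∈ ℤ² with n = x² + 5y², x even and y odd. -/
/-!
With `f(-x, -y) = ∑ m, (-1) ^ m x ^ (m (m + 1) / 2) y ^ (m (m - 1) / 2)`, the Jacobi triple product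
shows that `f(-q², -q³) f(-q, -q⁴)` and `f(-q, -q²) f(-q⁵, -q¹⁰)` are both equal to
`(q; q)_∞ (q⁵; q⁵)_∞`. Completing the square in the exponents turns the coefficient of `q ^ k` in
the first product into a signed count of representations `4 k + 1 = x² + y²` with a congruence
condition modulo `5`, and in the second into a signed count of representations
`4 k + 1 = x² + 5 y²` with `x + y ≡ -1` modulo `6`. Up to sign, these are all the representations
by `x² + 5 y²` with `3 ∤ x + y`; those with `3 ∣ x + y` cancel each other, by a reflection
preserving the form and changing the parity of `y`.

Congruences modulo `q ^ (N + 1)` between finite products and sums replace the passage to the limit.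
-/

section TripleProduct

open Finset

variable {R : Type*} [CommRing R]

/-- The `q`-Pochhammer symbol `(a; q)_n`. -/
def qPochhammer (a q : R) (n : ℕ) : R := ∏ i ∈ range n, (1 - a * q ^ i)

/-- The Gaussian binomial coefficient, defined by the `q`-Pascal rule so that it makes sense in
every commutative ring. -/
def gaussBinom (q : R) : ℕ → ℕ → R
  | _, 0 => 1
  | 0, _ + 1 => 0
  | n + 1, k + 1 => gaussBinom q n k + q ^ (k + 1) * gaussBinom q n (k + 1)

theorem qPochhammer_zero (a q : R) : qPochhammer a q 0 = 1 := prod_range_zero _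

theorem qPochhammer_succ (a q : R) (n : ℕ) :
    qPochhammer a q (n + 1) = qPochhammer a q n * (1 - a * q ^ n) :=
  prod_range_succ _ _

theorem qPochhammer_mul_right (a q : R) (d n : ℕ) :
    qPochhammer a q (d * n) = ∏ i ∈ range d, qPochhammer (a * q ^ i) (q ^ d) n := by
  induction n with
  | zero => simp [qPochhammer]
  | succ n ih =>
    simp only [qPochhammer_succ, prod_mul_distrib, ← ih]
    rw [qPochhammer, Nat.mul_succ, prod_range_add, ← qPochhammer]
    congr 1
    exact prod_congr rfl fun i _ ↦ by ring

theorem mul_pow_dvd_qPochhammer_sub (a q : R) {m n : ℕ} (h : n ≤ m) :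
    a * q ^ n ∣ qPochhammer a q m - qPochhammer a q n := by
  induction m, h using Nat.le_induction with
  | base => simp
  | succ m hnm ih =>
    have hdvd : a * q ^ n ∣ a * q ^ m := mul_dvd_mul_left a (pow_dvd_pow q hnm)
    rw [qPochhammer_succ, show qPochhammer a q m * (1 - a * q ^ m) - qPochhammer a q n =
      qPochhammer a q m - qPochhammer a q n - a * q ^ m * qPochhammer a q m by ring]
    exact dvd_sub ih (hdvd.mul_right _)

theorem isCoprime_qPochhammer (a q : R) (n : ℕ) : IsCoprime a (qPochhammer a q n) :=
  IsCoprime.prod_right fun i _ ↦ ⟨q ^ i, 1, by ring⟩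

theorem gaussBinom_zero_right (q : R) (n : ℕ) : gaussBinom q n 0 = 1 := by
  cases n <;> rfl

theorem gaussBinom_succ_succ (q : R) (n k : ℕ) :
    gaussBinom q (n + 1) (k + 1) = gaussBinom q n k + q ^ (k + 1) * gaussBinom q n (k + 1) :=
  rfl

theorem gaussBinom_eq_zero_of_lt (q : R) {n k : ℕ} (h : n < k) : gaussBinom q n k = 0 := by
  induction n generalizing k with
  | zero => obtain ⟨k, rfl⟩ := Nat.exists_eq_add_of_lt h; rw [Nat.zero_add]; rfl
  | succ n ih =>
    obtain ⟨k, rfl⟩ := Nat.exists_eq_succ_of_ne_zero (Nat.ne_zero_of_lt h)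
    rw [gaussBinom_succ_succ, ih (by omega), ih (by omega), mul_zero, add_zero]

theorem gaussBinom_self (q : R) (n : ℕ) : gaussBinom q n n = 1 := by
  induction n with
  | zero => rfl
  | succ n ih =>
    rw [gaussBinom_succ_succ, ih, gaussBinom_eq_zero_of_lt q n.lt_succ_self, mul_zero, add_zero]

theorem gaussBinom_succ_succ' (q : R) {n k : ℕ} (h : k ≤ n) :
    gaussBinom q (n + 1) (k + 1) = q ^ (n - k) * gaussBinom q n k + gaussBinom q n (k + 1) := by
  induction n generalizing k with
  | zero => obtain rfl := Nat.le_zero.1 h; simp [gaussBinom]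
  | succ n ih =>
    rcases k with _ | k
    · have hn := ih n.zero_le
      simp only [gaussBinom_succ_succ, gaussBinom_zero_right, Nat.sub_zero] at hn ⊢
      linear_combination q * hn
    · rcases h.eq_or_lt with h | h
      · obtain rfl : k = n := by omega
        simp [gaussBinom_self, gaussBinom_eq_zero_of_lt]
      · have hk : n - k = n - (k + 1) + 1 := by omega
        calc gaussBinom q (n + 2) (k + 2)
            = q ^ (n - k) * gaussBinom q n k + gaussBinom q n (k + 1) +
                q ^ (k + 2) *
                  (q ^ (n - (k + 1)) * gaussBinom q n (k + 1) + gaussBinom q n (k + 2)) := by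
              rw [gaussBinom_succ_succ, ih (by omega), ih (by omega : k + 1 ≤ n)]
          _ = q ^ (n - k) * (gaussBinom q n k + q ^ (k + 1) * gaussBinom q n (k + 1)) +
                (gaussBinom q n (k + 1) + q ^ (k + 2) * gaussBinom q n (k + 2)) := by
              rw [hk]
              ring
          _ = q ^ (n + 1 - (k + 1)) * gaussBinom q (n + 1) (k + 1) +
                gaussBinom q (n + 1) (k + 2) := by
              rw [Nat.add_sub_add_right, gaussBinom_succ_succ, gaussBinom_succ_succ]

theorem qPochhammer_mul_gaussBinom (q : R) (k l : ℕ) :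
    qPochhammer q q k * qPochhammer q q l * gaussBinom q (k + l) k = qPochhammer q q (k + l) := by
  induction k generalizing l with
  | zero => simp [qPochhammer_zero, gaussBinom_zero_right]
  | succ k ihk =>
    induction l with
    | zero => simp [qPochhammer_zero, gaussBinom_self]
    | succ l ihl =>
      have hk := ihk (l + 1)
      rw [show k + 1 + l = k + (l + 1) by ring] at ihl
      rw [show k + 1 + (l + 1) = k + (l + 1) + 1 by ring, gaussBinom_succ_succ]
      simp only [qPochhammer_succ q q k, qPochhammer_succ q q l,
        qPochhammer_succ q q (k + (l + 1))] at ihl hk ⊢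
      linear_combination (1 - q * q ^ k) * hk + q ^ (k + 1) * (1 - q * q ^ l) * ihl

theorem pow_dvd_qPochhammer_mul_gaussBinom_sub_one (q : R) {j k l n : ℕ}
    (hk : j ≤ k) (hl : j ≤ l) (hn : j ≤ n) :
    q ^ (j + 1) ∣ qPochhammer q q n * gaussBinom q (k + l) k - 1 := by
  have stable {i : ℕ} (hi : j ≤ i) : q ^ (j + 1) ∣ qPochhammer q q i - qPochhammer q q j :=
    pow_succ' q j ▸ mul_pow_dvd_qPochhammer_sub q q hi
  have hcop : IsCoprime (q ^ (j + 1)) (qPochhammer q q k * qPochhammer q q l) :=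
    ((isCoprime_qPochhammer q q k).mul_right (isCoprime_qPochhammer q q l)).pow_left
  have hnum : q ^ (j + 1) ∣
      qPochhammer q q n * qPochhammer q q (k + l) - qPochhammer q q k * qPochhammer q q l := by
    have h := dvd_sub (dvd_mul_sub_mul (stable hn) (stable (hk.trans (Nat.le_add_right k l))))
      (dvd_mul_sub_mul (stable hk) (stable hl))
    rwa [sub_sub_sub_cancel_right] at h
  refine hcop.dvd_of_dvd_mul_left ?_
  rw [← qPochhammer_mul_gaussBinom] at hnum
  convert hnum using 1
  ring

theorem sum_gaussBinom_succ_mul (q : R) (f : ℕ → R) (n : ℕ) :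
    ∑ k ∈ range (n + 2), gaussBinom q (n + 1) k * f k =
      ∑ k ∈ range (n + 1), gaussBinom q n k * (q ^ k * f k + f (k + 1)) := by
  have shift := sum_range_succ' (fun k ↦ gaussBinom q n k * (q ^ k * f k)) (n + 1)
  rw [sum_range_succ, gaussBinom_eq_zero_of_lt q n.lt_succ_self, zero_mul, add_zero] at shift
  simp only [mul_add, sum_add_distrib, shift]
  rw [sum_range_succ']
  simp only [gaussBinom_succ_succ, gaussBinom_zero_right, add_mul, sum_add_distrib, pow_zero]
  simp only [mul_left_comm, mul_assoc]
  ring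

theorem sum_gaussBinom_succ_mul' (q : R) (f : ℕ → R) (n : ℕ) :
    ∑ k ∈ range (n + 2), gaussBinom q (n + 1) k * f k =
      ∑ k ∈ range (n + 1), gaussBinom q n k * (f k + q ^ (n - k) * f (k + 1)) := by
  have shift := sum_range_succ' (fun k ↦ gaussBinom q n k * f k) (n + 1)
  rw [sum_range_succ, gaussBinom_eq_zero_of_lt q n.lt_succ_self, zero_mul, add_zero] at shift
  have pascal : ∀ k ∈ range (n + 1), gaussBinom q (n + 1) (k + 1) * f (k + 1) =
      gaussBinom q n k * (q ^ (n - k) * f (k + 1)) + gaussBinom q n (k + 1) * f (k + 1) := by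
    intro k hk
    rw [gaussBinom_succ_succ' q (mem_range_succ_iff.1 hk)]
    ring
  simp only [mul_add, sum_add_distrib, shift]
  rw [sum_range_succ', sum_congr rfl pascal, sum_add_distrib]
  simp only [gaussBinom_zero_right]
  ring

/-- The triangular number `m (m + 1) / 2` of an integer index `m`; it is never negative, so
`Int.toNat` loses nothing. -/
def triangle (m : ℤ) : ℕ := (m * (m + 1) / 2).toNat

theorem two_mul_natCast_triangle (m : ℤ) : 2 * (triangle m : ℤ) = m * (m + 1) := by
  have hnonneg : 0 ≤ m * (m + 1) := by
    rcases le_or_gt 0 m with h | h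
    · positivity
    · exact mul_nonneg_of_nonpos_of_nonpos h.le h
  rw [triangle, Int.toNat_of_nonneg (Int.ediv_nonneg hnonneg zero_le_two),
    Int.two_mul_ediv_two_of_even (Int.even_mul_succ_self m)]

theorem triangle_succ (m : ℤ) : (triangle (m + 1) : ℤ) = triangle m + m + 1 := by
  linarith [two_mul_natCast_triangle m, two_mul_natCast_triangle (m + 1)]

theorem triangle_neg (m : ℤ) : (triangle (-m) : ℤ) = triangle m - m := by
  linarith [two_mul_natCast_triangle m, two_mul_natCast_triangle (-m)]

theorem natAbs_le_triangle_add_triangle_neg (m : ℤ) :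
    m.natAbs ≤ triangle m + triangle (-m) := by
  have hsq : triangle m + triangle (-m) = m.natAbs * m.natAbs := by
    zify
    rw [abs_mul_abs_self]
    linarith [triangle_neg m, two_mul_natCast_triangle m]
  exact hsq ▸ Nat.le_mul_self _

/-- The general term `(-1) ^ m x ^ (m (m + 1) / 2) y ^ (m (m - 1) / 2)` of Ramanujan's theta
function `f(-x, -y)`. -/
def thetaTerm (x y : R) (m : ℤ) : R :=
  (m.negOnePow : ℤ) * (x ^ triangle m * y ^ triangle (-m))

/-- The symmetric partial sum of Ramanujan's theta function `f(-x, -y)`. -/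
noncomputable def partialTheta (x y : R) (N : ℕ) : R := ∑ m ∈ Icc (-(N : ℤ)) N, thetaTerm x y m

theorem thetaTerm_neg (x y : R) (m : ℤ) : thetaTerm x y (-m) = thetaTerm y x m := by
  rw [thetaTerm, thetaTerm, Int.negOnePow_neg, neg_neg, mul_comm (x ^ _)]

theorem pow_mul_thetaTerm_succ (x y : R) {i j : ℕ} {m : ℤ} (h : (i : ℤ) + m = j) :
    (x * y) ^ i * thetaTerm x y (m + 1) = -(x * (x * y) ^ j) * thetaTerm x y m := by
  have hx : i + triangle (m + 1) = 1 + j + triangle m := by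
    zify; linarith [triangle_succ m]
  have hy : i + triangle (-(m + 1)) = j + triangle (-m) := by
    zify; linarith [triangle_succ m, triangle_neg m, triangle_neg (m + 1)]
  calc (x * y) ^ i * thetaTerm x y (m + 1)
      = -(m.negOnePow : ℤ) * (x ^ (i + triangle (m + 1)) * y ^ (i + triangle (-(m + 1)))) := by
        simp only [thetaTerm, Int.negOnePow_succ, Units.val_neg, Int.cast_neg]
        ring
    _ = -(x * (x * y) ^ j) * thetaTerm x y m := by
        rw [hx, hy, thetaTerm]
        ring

theorem pow_mul_thetaTerm (x y : R) {i j : ℕ} {m : ℤ} (h : (i : ℤ) = j + m + 1) :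
    (x * y) ^ i * thetaTerm x y m = -(y * (x * y) ^ j) * thetaTerm x y (m + 1) := by
  have hswap := pow_mul_thetaTerm_succ y x (i := i) (j := j) (m := -(m + 1)) (by linarith)
  rwa [show -(m + 1) + 1 = -m by ring, thetaTerm_neg, thetaTerm_neg, mul_comm y x] at hswap

theorem sum_gaussBinom_mul_thetaTerm_succ_left (x y : R) (M N : ℕ) :
    ∑ k ∈ range (M + N + 2), gaussBinom (x * y) (M + N + 1) k * thetaTerm x y (k - N) =
      (1 - x * (x * y) ^ M) *
        ∑ k ∈ range (M + N + 1), gaussBinom (x * y) (M + N) k * thetaTerm x y (k - N) := by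
  rw [sum_gaussBinom_succ_mul', mul_sum]
  refine sum_congr rfl fun k hk ↦ ?_
  have hk : k ≤ M + N := mem_range_succ_iff.1 hk
  have hterm := pow_mul_thetaTerm_succ x y (i := M + N - k) (j := M) (m := k - N) (by omega)
  rw [show ((k + 1 : ℕ) : ℤ) - N = k - N + 1 by push_cast; ring, hterm]
  ring

theorem sum_gaussBinom_mul_thetaTerm_succ_right (x y : R) (M N : ℕ) :
    ∑ k ∈ range (M + N + 2), gaussBinom (x * y) (M + N + 1) k * thetaTerm x y (k - (N + 1 : ℕ)) =
      (1 - y * (x * y) ^ N) *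
        ∑ k ∈ range (M + N + 1), gaussBinom (x * y) (M + N) k * thetaTerm x y (k - N) := by
  rw [sum_gaussBinom_succ_mul, mul_sum]
  refine sum_congr rfl fun k _ ↦ ?_
  have hterm := pow_mul_thetaTerm x y (i := k) (j := N) (m := k - (N + 1 : ℕ))
    (by push_cast; ring)
  rw [hterm, show ((k + 1 : ℕ) : ℤ) - (N + 1 : ℕ) = k - N by push_cast; ring,
    show (k : ℤ) - (N + 1 : ℕ) + 1 = k - N by push_cast; ring]
  ring

/-- The finite form, due to Cauchy, of the Jacobi triple product identity. -/
theorem sum_gaussBinom_mul_thetaTerm (x y : R) (M N : ℕ) :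
    ∑ k ∈ range (M + N + 1), gaussBinom (x * y) (M + N) k * thetaTerm x y (k - N) =
      qPochhammer x (x * y) M * qPochhammer y (x * y) N := by
  induction N with
  | zero =>
    induction M with
    | zero => simp [gaussBinom, thetaTerm, triangle, qPochhammer]
    | succ M ih =>
      refine (sum_gaussBinom_mul_thetaTerm_succ_left x y M 0).trans ?_
      rw [ih, qPochhammer_succ]
      ring
  | succ N ih =>
    refine (sum_gaussBinom_mul_thetaTerm_succ_right x y M N).trans ?_
    rw [ih, qPochhammer_succ]
    ring

theorem sum_range_natCast_sub {A : Type*} [AddCommMonoid A] (f : ℤ → A) (N : ℕ) :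
    ∑ k ∈ range (N + N + 1), f (k - N) = ∑ m ∈ Icc (-(N : ℤ)) N, f m := by
  refine sum_nbij' (fun k ↦ (k : ℤ) - N) (fun m ↦ (m + N).toNat) ?_ ?_ ?_ ?_ fun _ _ ↦ rfl <;>
    simp only [mem_range, mem_Icc] <;> omega

theorem pow_natAbs_dvd_thetaTerm {d x y : R} (hx : d ∣ x) (hy : d ∣ y) (m : ℤ) :
    d ^ m.natAbs ∣ thetaTerm x y m := by
  refine (pow_dvd_pow d (natAbs_le_triangle_add_triangle_neg m)).trans ?_
  rw [pow_add]
  exact (mul_dvd_mul (pow_dvd_pow_of_dvd hx _) (pow_dvd_pow_of_dvd hy _)).mul_left _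

/-- The truncation `(xy; xy)_N (x; xy)_N (y; xy)_N` of the product side of the Jacobi triple
product identity. -/
def tripleProduct (x y : R) (N : ℕ) : R :=
  qPochhammer (x * y) (x * y) N * (qPochhammer x (x * y) N * qPochhammer y (x * y) N)

theorem pow_dvd_tripleProduct_sub_partialTheta {d x y : R} (hx : d ∣ x) (hy : d ∣ y) (N : ℕ) :
    d ^ (N + 1) ∣ tripleProduct x y N - partialTheta x y N := by
  rw [tripleProduct, ← sum_gaussBinom_mul_thetaTerm, partialTheta, ← sum_range_natCast_sub,
    mul_sum, ← sum_sub_distrib]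
  refine dvd_sum fun k hk ↦ ?_
  have hk : k ≤ N + N := mem_range_succ_iff.1 hk
  obtain ⟨l, hl⟩ := Nat.exists_eq_add_of_le hk
  set m : ℤ := k - N
  -- The farther the index `m` is from `0`, the less precisely the normalized Gaussian binomial
  -- is known to be `1`, but the more factors `d` the theta term itself supplies.
  have hbinom : d ^ (N - m.natAbs + 1) ∣
      qPochhammer (x * y) (x * y) N * gaussBinom (x * y) (N + N) k - 1 :=
    (pow_dvd_pow_of_dvd (hx.mul_right y) _).trans <| hl ▸
      pow_dvd_qPochhammer_mul_gaussBinom_sub_one (x * y) (by omega) (by omega) (by omega)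
  rw [show N + 1 = N - m.natAbs + 1 + m.natAbs by omega, pow_add, ← mul_assoc, ← sub_one_mul]
  exact mul_dvd_mul hbinom (pow_natAbs_dvd_thetaTerm hx hy m)

theorem tripleProduct_self_sq (q : R) (N : ℕ) :
    tripleProduct q (q ^ 2) N = qPochhammer q q (3 * N) := by
  rw [tripleProduct, qPochhammer_mul_right]
  simp only [prod_range_succ, prod_range_zero, one_mul, ← pow_succ', Nat.reduceAdd, pow_one]
  ring

theorem tripleProduct_sq_cube_mul_tripleProduct_self_pow_four (q : R) (N : ℕ) :
    tripleProduct (q ^ 2) (q ^ 3) N * tripleProduct q (q ^ 4) N =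
      qPochhammer q q (5 * N) * qPochhammer (q ^ 5) (q ^ 5) N := by
  rw [tripleProduct, tripleProduct, qPochhammer_mul_right]
  simp only [prod_range_succ, prod_range_zero, one_mul, ← pow_succ', ← pow_add, Nat.reduceAdd,
    pow_one]
  ring

theorem pow_dvd_partialTheta_mul_sub (q : R) (N : ℕ) :
    q ^ (N + 1) ∣ partialTheta (q ^ 2) (q ^ 3) N * partialTheta q (q ^ 4) N -
      partialTheta q (q ^ 2) N * partialTheta (q ^ 5) (q ^ 10) N := by
  have hpow {i : ℕ} (hi : 0 < i) : q ∣ q ^ i := dvd_pow_self q hi.ne'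
  have left_approx := dvd_mul_sub_mul
    (pow_dvd_tripleProduct_sub_partialTheta (hpow two_pos) (hpow three_pos) N)
    (pow_dvd_tripleProduct_sub_partialTheta dvd_rfl (hpow four_pos) N)
  have right_approx := dvd_mul_sub_mul
    (pow_dvd_tripleProduct_sub_partialTheta dvd_rfl (hpow two_pos) N)
    (pow_dvd_tripleProduct_sub_partialTheta (hpow (Nat.succ_pos 4)) (hpow (Nat.succ_pos 9)) N)
  rw [tripleProduct_sq_cube_mul_tripleProduct_self_pow_four] at left_approx
  have product₅ : tripleProduct (q ^ 5) (q ^ 10) N = qPochhammer (q ^ 5) (q ^ 5) (3 * N) := by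
    rw [← tripleProduct_self_sq, ← pow_mul]
  rw [tripleProduct_self_sq, product₅] at right_approx
  have stable₁ : q ^ (N + 1) ∣ qPochhammer q q (5 * N) - qPochhammer q q (3 * N) :=
    (pow_dvd_pow q (by omega)).trans <|
      pow_succ' q (3 * N) ▸ mul_pow_dvd_qPochhammer_sub q q (by omega : 3 * N ≤ 5 * N)
  have stable₅ : q ^ (N + 1) ∣
      qPochhammer (q ^ 5) (q ^ 5) (3 * N) - qPochhammer (q ^ 5) (q ^ 5) N :=
    (pow_dvd_pow_of_dvd (hpow (Nat.succ_pos 4)) _).trans <|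
      pow_succ' (q ^ 5) N ▸ mul_pow_dvd_qPochhammer_sub (q ^ 5) (q ^ 5) (by omega : N ≤ 3 * N)
  have products := dvd_mul_sub_mul stable₁ (dvd_sub_comm.1 stable₅)
  have hsub := dvd_add (dvd_sub products left_approx) right_approx
  convert hsub using 1
  ring

end TripleProduct

section SignedCount

open Finset Polynomial

/-- The exponent of `q` in the `m`-th term of the theta function `f(-q ^ a, -q ^ b)`. -/
def thetaExp (a b : ℕ) (m : ℤ) : ℕ := a * triangle m + b * triangle (-m)

theorem two_mul_natCast_thetaExp (a b : ℕ) (m : ℤ) :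
    2 * (thetaExp a b m : ℤ) = a * (m * (m + 1)) + b * (m * (m - 1)) := by
  rw [thetaExp]
  push_cast
  linear_combination (a : ℤ) * two_mul_natCast_triangle m + b * two_mul_natCast_triangle (-m)

theorem natAbs_le_thetaExp {a b : ℕ} (ha : 1 ≤ a) (hb : 1 ≤ b) (m : ℤ) :
    m.natAbs ≤ thetaExp a b m :=
  (natAbs_le_triangle_add_triangle_neg m).trans <|
    add_le_add (Nat.le_mul_of_pos_left _ ha) (Nat.le_mul_of_pos_left _ hb)

theorem thetaTerm_X_pow_mul_thetaTerm_X_pow (a b c d : ℕ) (m l : ℤ) :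
    thetaTerm ((X : ℤ[X]) ^ a) (X ^ b) m * thetaTerm (X ^ c) (X ^ d) l =
      C ((m + l).negOnePow : ℤ) * X ^ (thetaExp a b m + thetaExp c d l) := by
  simp only [thetaTerm, thetaExp, Int.negOnePow_add, Units.val_mul, eq_intCast, Int.cast_mul,
    ← pow_mul, pow_add]
  ring

theorem sum_negOnePow {ι : Type*} (s : Finset ι) (f : ι → ℤ) :
    ∑ i ∈ s, ((f i).negOnePow : ℤ) = #{i ∈ s | Even (f i)} - #{i ∈ s | Odd (f i)} := by
  have hsign (i : ι) : ((f i).negOnePow : ℤ) = if Even (f i) then 1 else -1 := by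
    split_ifs with h
    · rw [Int.negOnePow_even _ h, Units.val_one]
    · rw [Int.negOnePow_odd _ (Int.not_even_iff_odd.1 h), Units.val_neg, Units.val_one]
  simp only [hsign, sum_ite, sum_const, nsmul_eq_mul, mul_one, mul_neg, sub_eq_add_neg,
    Int.not_even_iff_odd]

/-- The index pairs `(m, l)` whose terms contribute to the coefficient of `q ^ k` in
`f(-q ^ a, -q ^ b) f(-q ^ c, -q ^ d)`. -/
def thetaPairs (a b c d k : ℕ) : Set (ℤ × ℤ) :=
  {p | thetaExp a b p.1 + thetaExp c d p.2 = k}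

theorem coeff_partialTheta_mul_partialTheta {a b c d : ℕ} (ha : 1 ≤ a) (hb : 1 ≤ b) (hc : 1 ≤ c)
    (hd : 1 ≤ d) (k : ℕ) :
    (partialTheta ((X : ℤ[X]) ^ a) (X ^ b) k * partialTheta (X ^ c) (X ^ d) k).coeff k =
      ({p ∈ thetaPairs a b c d k | Even (p.1 + p.2)}.ncard : ℤ) -
        {p ∈ thetaPairs a b c d k | Odd (p.1 + p.2)}.ncard := by
  set box : Finset (ℤ × ℤ) := Icc (-(k : ℤ)) k ×ˢ Icc (-(k : ℤ)) k
  set pairs := {p ∈ box | thetaExp a b p.1 + thetaExp c d p.2 = k} with hpairs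
  have mem_pairs (p : ℤ × ℤ) : p ∈ pairs ↔ p ∈ thetaPairs a b c d k := by
    have h₁ := natAbs_le_thetaExp ha hb p.1
    have h₂ := natAbs_le_thetaExp hc hd p.2
    simp only [hpairs, box, thetaPairs, mem_filter, mem_product, mem_Icc, Set.mem_ofPred_eq]
    omega
  have ncard_eq (P : ℤ × ℤ → Prop) [DecidablePred P] :
      {p ∈ thetaPairs a b c d k | P p}.ncard = #{p ∈ pairs | P p} := by
    rw [← Set.ncard_coe_finset]
    simp only [coe_filter, mem_pairs]
  rw [ncard_eq, ncard_eq, ← sum_negOnePow pairs fun p ↦ p.1 + p.2, partialTheta, partialTheta,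
    sum_mul_sum, ← sum_product', finsetSum_coeff, hpairs, sum_filter]
  refine sum_congr rfl fun p _ ↦ ?_
  simp only [thetaTerm_X_pow_mul_thetaTerm_X_pow, coeff_C_mul_X_pow, eq_comm]

theorem ncard_thetaPairs_sub_ncard_thetaPairs (k : ℕ) :
    ({p ∈ thetaPairs 2 3 1 4 k | Even (p.1 + p.2)}.ncard : ℤ) -
        {p ∈ thetaPairs 2 3 1 4 k | Odd (p.1 + p.2)}.ncard =
      {p ∈ thetaPairs 1 2 5 10 k | Even (p.1 + p.2)}.ncard -
        {p ∈ thetaPairs 1 2 5 10 k | Odd (p.1 + p.2)}.ncard := by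
  have hcoeff := X_pow_dvd_iff.1 (pow_dvd_partialTheta_mul_sub (X : ℤ[X]) k) k k.lt_succ_self
  have left := coeff_partialTheta_mul_partialTheta (a := 2) (b := 3) (c := 1) (d := 4)
    (by norm_num) (by norm_num) (by norm_num) (by norm_num) k
  have right := coeff_partialTheta_mul_partialTheta (a := 1) (b := 2) (c := 5) (d := 10)
    (by norm_num) (by norm_num) (by norm_num) (by norm_num) k
  rw [pow_one] at left right
  rw [← left, ← right, ← sub_eq_zero, ← coeff_sub, hcoeff]

end SignedCount

section QuadraticForms

theorem ncard_eq_two_mul_ncard_sep {α : Type*} [InvolutiveNeg α] {S : Set α} {P : α → Prop}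
    (hS : ∀ p ∈ S, -p ∈ S) (hP : ∀ p ∈ S, P (-p) ↔ ¬P p) : S.ncard = 2 * {p ∈ S | P p}.ncard := by
  have hneg : {p ∈ S | ¬P p} = Neg.neg ⁻¹' {p ∈ S | P p} := by
    ext p
    constructor
    · exact fun ⟨hp, hPp⟩ ↦ ⟨hS p hp, (hP p hp).2 hPp⟩
    · rintro ⟨hp, hPp⟩
      have hp : p ∈ S := neg_neg p ▸ hS _ hp
      exact ⟨hp, (hP p hp).1 hPp⟩
  have hencard : S.encard = 2 * {p ∈ S | P p}.encard := by
    have hunion : S = {p ∈ S | P p} ∪ {p ∈ S | ¬P p} := by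
      ext p
      simp only [Set.mem_union, Set.mem_ofPred_eq]
      tauto
    have hdisj : Disjoint {p ∈ S | P p} {p ∈ S | ¬P p} :=
      Set.disjoint_left.2 fun _ hp hnp ↦ hnp.2 hp.2
    conv_lhs => rw [hunion, Set.encard_union_eq hdisj, hneg,
      Set.encard_preimage_of_bijective neg_bijective]
    rw [two_mul]
  rw [Set.ncard, hencard, ENat.toNat_mul, Set.ncard]
  rfl

theorem ncard_pos_eq_ncard_modEq_neg (n r : ℤ) (hr : ¬r ≡ -r [ZMOD 5]) :
    {p : ℤ × ℤ | n = p.1 ^ 2 + p.2 ^ 2 ∧ 0 < p.1 ∧ Odd p.1 ∧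
        (p.1 + 3 * p.2 ≡ r [ZMOD 5] ∨ p.1 + 3 * p.2 ≡ -r [ZMOD 5])}.ncard =
      {p : ℤ × ℤ | n = p.1 ^ 2 + p.2 ^ 2 ∧ Odd p.1 ∧ p.1 + 3 * p.2 ≡ -r [ZMOD 5]}.ncard := by
  set S : Set (ℤ × ℤ) := {p | n = p.1 ^ 2 + p.2 ^ 2 ∧ Odd p.1 ∧
    (p.1 + 3 * p.2 ≡ r [ZMOD 5] ∨ p.1 + 3 * p.2 ≡ -r [ZMOD 5])} with hSdef
  have hS : ∀ p ∈ S, -p ∈ S := by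
    rintro ⟨x, y⟩ ⟨hn, hodd, hmod⟩
    refine ⟨by simpa using hn, hodd.neg, ?_⟩
    simp only [Prod.neg_mk, Int.ModEq] at hmod ⊢
    omega
  have hpos := ncard_eq_two_mul_ncard_sep (P := fun p ↦ 0 < p.1) hS <| by
    rintro ⟨x, y⟩ ⟨-, ⟨j, hj⟩, -⟩
    simp only [Prod.neg_mk] at hj ⊢
    omega
  have hmodEq := ncard_eq_two_mul_ncard_sep (P := fun p ↦ p.1 + 3 * p.2 ≡ -r [ZMOD 5]) hS <| by
    rintro ⟨x, y⟩ ⟨-, -, hmod⟩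
    simp only [Prod.neg_mk, Int.ModEq] at hr hmod ⊢
    omega
  have hcard := Nat.eq_of_mul_eq_mul_left two_pos (hpos.symm.trans hmodEq)
  convert hcard using 2 <;> ext p <;> simp only [hSdef, Set.mem_ofPred_eq] <;> tauto

theorem mem_thetaPairs_two_three_one_four_iff (k : ℕ) (m l : ℤ) :
    (m, l) ∈ thetaPairs 2 3 1 4 k ↔ (4 * k + 1 : ℤ) = (m + 3 * l - 1) ^ 2 + (3 * m - l) ^ 2 := by
  have hm := two_mul_natCast_thetaExp 2 3 m
  have hl := two_mul_natCast_thetaExp 1 4 l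
  push_cast at hm hl
  rw [thetaPairs, Set.mem_ofPred_eq, ← Nat.cast_inj (R := ℤ)]
  push_cast
  constructor <;> intro h <;> linarith

theorem mem_thetaPairs_one_two_five_ten_iff (k : ℕ) (m l : ℤ) :
    (m, l) ∈ thetaPairs 1 2 5 10 k ↔
      (4 * k + 1 : ℤ) = (m + 5 * l - 1) ^ 2 + 5 * (l - m) ^ 2 := by
  have hm := two_mul_natCast_thetaExp 1 2 m
  have hl := two_mul_natCast_thetaExp 5 10 l
  push_cast at hm hl
  rw [thetaPairs, Set.mem_ofPred_eq, ← Nat.cast_inj (R := ℤ)]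
  push_cast
  constructor <;> intro h <;> linarith

theorem odd_add_of_four_mul_add_one_eq {k x y : ℤ} (h : 4 * k + 1 = x ^ 2 + y ^ 2) :
    Odd (x + y) := by
  have hodd : Odd (x ^ 2 + y ^ 2) := h ▸ ⟨2 * k, by ring⟩
  simpa [Int.odd_add, Int.odd_pow, Int.even_pow] using hodd

theorem ncard_thetaPairs_two_three_one_four (k : ℕ) (P : ℤ × ℤ → Prop) :
    {p ∈ thetaPairs 2 3 1 4 k | P (p.1 + 3 * p.2 - 1, 3 * p.1 - p.2)}.ncard =
      {p : ℤ × ℤ | (4 * k + 1 : ℤ) = p.1 ^ 2 + p.2 ^ 2 ∧ P p ∧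
        p.1 + 3 * p.2 ≡ -1 [ZMOD 5]}.ncard := by
  set φ : ℤ × ℤ → ℤ × ℤ := fun p ↦ (p.1 + 3 * p.2 - 1, 3 * p.1 - p.2) with hφ
  have hinj : φ.Injective := by
    rintro ⟨m, l⟩ ⟨m', l'⟩ h
    simp only [hφ, Prod.mk.injEq] at h ⊢
    omega
  refine Eq.trans ?_ (Set.ncard_preimage_of_injective_subset_range hinj ?_)
  · congr 1
    ext ⟨m, l⟩
    have hmod : m + 3 * l - 1 + 3 * (3 * m - l) ≡ -1 [ZMOD 5] := by
      simp only [Int.ModEq]; omega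
    simp only [hφ, Set.mem_preimage, Set.mem_ofPred_eq, mem_thetaPairs_two_three_one_four_iff,
      hmod, and_true]
  · rintro ⟨x, y⟩ ⟨hn, -, hmod⟩
    obtain ⟨j, hj⟩ := odd_add_of_four_mul_add_one_eq hn
    refine ⟨((x + 3 * y + 1) / 10, (3 * x - y + 3) / 10), ?_⟩
    simp only [hφ, Int.ModEq, Prod.mk.injEq] at hmod ⊢
    omega

theorem ncard_thetaPairs_one_two_five_ten (k : ℕ) (P : ℤ × ℤ → Prop) :
    {p ∈ thetaPairs 1 2 5 10 k | P (p.1 + 5 * p.2 - 1, p.2 - p.1)}.ncard =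
      {p : ℤ × ℤ | (4 * k + 1 : ℤ) = p.1 ^ 2 + 5 * p.2 ^ 2 ∧ P p ∧
        p.1 + p.2 ≡ -1 [ZMOD 6]}.ncard := by
  set ψ : ℤ × ℤ → ℤ × ℤ := fun p ↦ (p.1 + 5 * p.2 - 1, p.2 - p.1) with hψ
  have hinj : ψ.Injective := by
    rintro ⟨m, l⟩ ⟨m', l'⟩ h
    simp only [hψ, Prod.mk.injEq] at h ⊢
    omega
  refine Eq.trans ?_ (Set.ncard_preimage_of_injective_subset_range hinj ?_)
  · congr 1
    ext ⟨m, l⟩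
    have hmod : m + 5 * l - 1 + (l - m) ≡ -1 [ZMOD 6] := by
      simp only [Int.ModEq]; omega
    simp only [hψ, Set.mem_preimage, Set.mem_ofPred_eq, mem_thetaPairs_one_two_five_ten_iff,
      hmod, and_true]
  · rintro ⟨x, y⟩ ⟨-, -, hmod⟩
    refine ⟨((x + y + 1) / 6 - y, (x + y + 1) / 6), ?_⟩
    simp only [hψ, Int.ModEq, Prod.mk.injEq] at hmod ⊢
    omega

theorem ncard_thetaPairs_two_three_one_four_even (k : ℕ) :
    {p ∈ thetaPairs 2 3 1 4 k | Even (p.1 + p.2)}.ncard =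
      {p : ℤ × ℤ | (4 * k + 1 : ℤ) = p.1 ^ 2 + p.2 ^ 2 ∧ Odd p.1 ∧
        p.1 + 3 * p.2 ≡ -1 [ZMOD 5]}.ncard := by
  have hparity (m l : ℤ) : Even (m + l) ↔ Odd (m + 3 * l - 1) := by
    rw [Int.even_iff, Int.odd_iff]
    omega
  simp only [hparity]
  exact ncard_thetaPairs_two_three_one_four k fun p ↦ Odd p.1

theorem ncard_thetaPairs_two_three_one_four_odd (k : ℕ) :
    {p ∈ thetaPairs 2 3 1 4 k | Odd (p.1 + p.2)}.ncard =
      {p : ℤ × ℤ | (4 * k + 1 : ℤ) = p.1 ^ 2 + p.2 ^ 2 ∧ Odd p.1 ∧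
        p.1 + 3 * p.2 ≡ -2 [ZMOD 5]}.ncard := by
  have hparity (m l : ℤ) : Odd (m + l) ↔ Odd (3 * m - l) := by
    rw [Int.odd_iff, Int.odd_iff]
    omega
  simp only [hparity]
  rw [ncard_thetaPairs_two_three_one_four k fun p ↦ Odd p.2]
  set rotate : ℤ × ℤ → ℤ × ℤ := fun p ↦ (p.2, -p.1) with hrotate
  have hinj : rotate.Injective := by
    rintro ⟨x, y⟩ ⟨x', y'⟩ h
    simp only [hrotate, Prod.mk.injEq] at h ⊢
    omega
  refine Eq.trans ?_ (Set.ncard_preimage_of_injective_subset_range hinj ?_)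
  · congr 1
    ext ⟨x, y⟩
    have hmod : x + 3 * y ≡ -1 [ZMOD 5] ↔ y + 3 * -x ≡ -2 [ZMOD 5] := by
      simp only [Int.ModEq]
      omega
    simp only [hrotate, Set.mem_preimage, Set.mem_ofPred_eq, hmod, neg_sq, add_comm (x ^ 2)]
  · exact fun p _ ↦ ⟨(-p.2, p.1), by simp only [hrotate, neg_neg]⟩

theorem ncard_thetaPairs_one_two_five_ten_even (k : ℕ) :
    {p ∈ thetaPairs 1 2 5 10 k | Even (p.1 + p.2)}.ncard =
      {p : ℤ × ℤ | (4 * k + 1 : ℤ) = p.1 ^ 2 + 5 * p.2 ^ 2 ∧ Even p.2 ∧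
        p.1 + p.2 ≡ -1 [ZMOD 6]}.ncard := by
  have hparity (m l : ℤ) : Even (m + l) ↔ Even (l - m) := by
    rw [Int.even_iff, Int.even_iff]
    omega
  simp only [hparity]
  exact ncard_thetaPairs_one_two_five_ten k fun p ↦ Even p.2

theorem ncard_thetaPairs_one_two_five_ten_odd (k : ℕ) :
    {p ∈ thetaPairs 1 2 5 10 k | Odd (p.1 + p.2)}.ncard =
      {p : ℤ × ℤ | (4 * k + 1 : ℤ) = p.1 ^ 2 + 5 * p.2 ^ 2 ∧ Odd p.2 ∧
        p.1 + p.2 ≡ -1 [ZMOD 6]}.ncard := by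
  have hparity (m l : ℤ) : Odd (m + l) ↔ Odd (l - m) := by
    rw [Int.odd_iff, Int.odd_iff]
    omega
  simp only [hparity]
  exact ncard_thetaPairs_one_two_five_ten k fun p ↦ Odd p.2

theorem finite_setOf_eq_sq_add_five_mul_sq (n : ℤ) :
    {p : ℤ × ℤ | n = p.1 ^ 2 + 5 * p.2 ^ 2}.Finite := by
  refine ((Set.finite_Icc (-n) n).prod (Set.finite_Icc (-n) n)).subset ?_
  rintro ⟨x, y⟩ (h : n = x ^ 2 + 5 * y ^ 2)
  have bound (z : ℤ) : |z| ≤ z ^ 2 := by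
    rw [← sq_abs]
    exact Int.le_self_sq |z|
  refine ⟨abs_le.1 ((bound x).trans ?_), abs_le.1 ((bound y).trans ?_)⟩ <;>
    linarith [sq_nonneg x, sq_nonneg y]

theorem ncard_modEq_one_or_neg_one_eq_two_mul (n : ℤ) {P : ℤ → Prop} (hP : ∀ y, P (-y) ↔ P y) :
    {p : ℤ × ℤ | n = p.1 ^ 2 + 5 * p.2 ^ 2 ∧ P p.2 ∧
        (p.1 + p.2 ≡ 1 [ZMOD 6] ∨ p.1 + p.2 ≡ -1 [ZMOD 6])}.ncard =
      2 * {p : ℤ × ℤ |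
        n = p.1 ^ 2 + 5 * p.2 ^ 2 ∧ P p.2 ∧ p.1 + p.2 ≡ -1 [ZMOD 6]}.ncard := by
  rw [ncard_eq_two_mul_ncard_sep (P := fun p ↦ p.1 + p.2 ≡ -1 [ZMOD 6])]
  · congr 2
    ext p
    simp only [Set.mem_ofPred_eq]
    tauto
  · rintro ⟨x, y⟩ ⟨hn, hy, hmod⟩
    refine ⟨by simpa using hn, (hP y).2 hy, ?_⟩
    simp only [Prod.neg_mk, Int.ModEq] at hmod ⊢
    omega
  · rintro ⟨x, y⟩ ⟨-, -, hmod⟩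
    simp only [Prod.neg_mk, Int.ModEq] at hmod ⊢
    omega

theorem ncard_odd_add_eq_two_mul_ncard_add_ncard (n : ℤ) {P : ℤ → Prop}
    (hP : ∀ y, P (-y) ↔ P y) :
    {p : ℤ × ℤ | n = p.1 ^ 2 + 5 * p.2 ^ 2 ∧ P p.2 ∧ Odd (p.1 + p.2)}.ncard =
      2 * {p : ℤ × ℤ | n = p.1 ^ 2 + 5 * p.2 ^ 2 ∧ P p.2 ∧ p.1 + p.2 ≡ -1 [ZMOD 6]}.ncard +
        {p : ℤ × ℤ | n = p.1 ^ 2 + 5 * p.2 ^ 2 ∧ P p.2 ∧ p.1 + p.2 ≡ 3 [ZMOD 6]}.ncard := by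
  have hfin := finite_setOf_eq_sq_add_five_mul_sq n
  rw [← ncard_modEq_one_or_neg_one_eq_two_mul n hP, ← Set.ncard_union_eq _
    (hfin.subset fun _ h ↦ h.1) (hfin.subset fun _ h ↦ h.1)]
  · congr 1
    ext ⟨x, y⟩
    simp only [Set.mem_union, Set.mem_ofPred_eq, Int.odd_iff, Int.ModEq, ← and_or_left]
    refine and_congr_right fun _ ↦ and_congr_right fun _ ↦ ?_
    omega
  · refine Set.disjoint_left.2 ?_
    rintro ⟨x, y⟩ ⟨-, -, hunit⟩ ⟨-, -, hthree⟩
    simp only [Int.ModEq] at hunit hthree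
    omega

theorem ncard_odd_even_eq_two_mul_ncard_add_ncard (n : ℤ) :
    {p : ℤ × ℤ | n = p.1 ^ 2 + 5 * p.2 ^ 2 ∧ Odd p.1 ∧ Even p.2}.ncard =
      2 * {p : ℤ × ℤ | n = p.1 ^ 2 + 5 * p.2 ^ 2 ∧ Even p.2 ∧ p.1 + p.2 ≡ -1 [ZMOD 6]}.ncard +
        {p : ℤ × ℤ | n = p.1 ^ 2 + 5 * p.2 ^ 2 ∧ Even p.2 ∧ p.1 + p.2 ≡ 3 [ZMOD 6]}.ncard := by
  have hparity (x y : ℤ) : Odd x ∧ Even y ↔ Even y ∧ Odd (x + y) := by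
    rw [Int.odd_add]
    grind
  simp_rw [hparity]
  exact ncard_odd_add_eq_two_mul_ncard_add_ncard n fun _ ↦ even_neg

theorem ncard_even_odd_eq_two_mul_ncard_add_ncard (n : ℤ) :
    {p : ℤ × ℤ | n = p.1 ^ 2 + 5 * p.2 ^ 2 ∧ Even p.1 ∧ Odd p.2}.ncard =
      2 * {p : ℤ × ℤ | n = p.1 ^ 2 + 5 * p.2 ^ 2 ∧ Odd p.2 ∧ p.1 + p.2 ≡ -1 [ZMOD 6]}.ncard +
        {p : ℤ × ℤ | n = p.1 ^ 2 + 5 * p.2 ^ 2 ∧ Odd p.2 ∧ p.1 + p.2 ≡ 3 [ZMOD 6]}.ncard := by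
  have hparity (x y : ℤ) : Even x ∧ Odd y ↔ Odd y ∧ Odd (x + y) := by
    rw [Int.odd_add]
    grind
  simp_rw [hparity]
  exact ncard_odd_add_eq_two_mul_ncard_add_ncard n fun _ ↦ odd_neg

/- When `3 ∣ x + y`, write `x = 3 z - y`; then `x ^ 2 + 5 y ^ 2` is preserved by the reflection that
carries `(3 z - y, y)` to `(2 z + y, z - y)`, and this changes the parity of `y` as `z` is odd. -/
theorem ncard_even_eq_ncard_odd_of_modEq_three (n : ℤ) :
    {p : ℤ × ℤ | n = p.1 ^ 2 + 5 * p.2 ^ 2 ∧ Even p.2 ∧ p.1 + p.2 ≡ 3 [ZMOD 6]}.ncard =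
      {p : ℤ × ℤ | n = p.1 ^ 2 + 5 * p.2 ^ 2 ∧ Odd p.2 ∧ p.1 + p.2 ≡ 3 [ZMOD 6]}.ncard := by
  set chart : ℤ × ℤ → ℤ × ℤ := fun p ↦ (3 * p.1 - p.2, p.2) with hchart
  set flip : ℤ × ℤ → ℤ × ℤ := fun p ↦ (2 * p.1 + p.2, p.1 - p.2) with hflip
  have hchart_inj : chart.Injective := by
    rintro ⟨z, y⟩ ⟨z', y'⟩ h
    simp only [hchart, Prod.mk.injEq] at h ⊢
    omega
  have hflip_inj : flip.Injective := by
    rintro ⟨z, y⟩ ⟨z', y'⟩ h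
    simp only [hflip, Prod.mk.injEq] at h ⊢
    omega
  refine (Set.ncard_preimage_of_injective_subset_range hchart_inj ?_).symm.trans <|
    Eq.trans ?_ (Set.ncard_preimage_of_injective_subset_range hflip_inj ?_)
  · rintro ⟨x, y⟩ ⟨-, -, hmod⟩
    refine ⟨((x + y) / 3, y), ?_⟩
    simp only [hchart, Int.ModEq, Prod.mk.injEq, and_true] at hmod ⊢
    omega
  · congr 1
    ext ⟨z, y⟩
    have hform : (3 * z - y) ^ 2 + 5 * y ^ 2 = (2 * z + y) ^ 2 + 5 * (z - y) ^ 2 := by ring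
    simp only [hchart, hflip, Set.mem_preimage, Set.mem_ofPred_eq, hform, Int.even_iff,
      Int.odd_iff, Int.ModEq]
    refine and_congr_right fun _ ↦ ?_
    omega
  · rintro ⟨x, y⟩ ⟨-, -, hmod⟩
    refine ⟨((x + y) / 3, (x + y) / 3 - y), ?_⟩
    simp only [hflip, Int.ModEq, Prod.mk.injEq] at hmod ⊢
    omega

end QuadraticForms

theorem threefield_count_brink (k : ℕ) :
    2 * (({pr : ℤ × ℤ | (4 * k + 1 : ℤ) = pr.1 ^ 2 + pr.2 ^ 2 ∧ 0 < pr.1 ∧ Odd pr.1 ∧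
          (pr.1 + 3 * pr.2 ≡ 1 [ZMOD 5] ∨ pr.1 + 3 * pr.2 ≡ -1 [ZMOD 5])}.ncard : ℤ) -
        ({pr : ℤ × ℤ | (4 * k + 1 : ℤ) = pr.1 ^ 2 + pr.2 ^ 2 ∧ 0 < pr.1 ∧ Odd pr.1 ∧
          (pr.1 + 3 * pr.2 ≡ 2 [ZMOD 5] ∨ pr.1 + 3 * pr.2 ≡ -2 [ZMOD 5])}.ncard : ℤ)) =
      (({pr : ℤ × ℤ | (4 * k + 1 : ℤ) = pr.1 ^ 2 + 5 * pr.2 ^ 2 ∧ Odd pr.1 ∧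
          Even pr.2}.ncard : ℤ) -
        ({pr : ℤ × ℤ | (4 * k + 1 : ℤ) = pr.1 ^ 2 + 5 * pr.2 ^ 2 ∧ Even pr.1 ∧
          Odd pr.2}.ncard : ℤ)) := by
  have coeff_eq := ncard_thetaPairs_sub_ncard_thetaPairs k
  rw [ncard_thetaPairs_two_three_one_four_even, ncard_thetaPairs_two_three_one_four_odd,
    ncard_thetaPairs_one_two_five_ten_even, ncard_thetaPairs_one_two_five_ten_odd] at coeff_eq
  rw [ncard_pos_eq_ncard_modEq_neg _ 1 (by decide), ncard_pos_eq_ncard_modEq_neg _ 2 (by decide),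
    coeff_eq, ncard_odd_even_eq_two_mul_ncard_add_ncard,
    ncard_even_odd_eq_two_mul_ncard_add_ncard, ncard_even_eq_ncard_odd_of_modEq_three]
  push_cast
  ring
end
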